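/- arXiv:1910.09829 — 3 statements merged into one kernel-verified Lean document; each statement's English description precedes it below -/
import Mathlib

section
/- There exists an LSTS TS (with one atomic proposition) and a weak stubborn set r (a reduction function satisfying D1, D2w, V, I and L at every state, with finite reduced LSTS) such that the reduced LSTS TS_r is not stutter-trace equivalent to TS; hence weak stubborn sets with condition D1 do not in general preserve stutter-trace equivalence. -/
open scoped Classical

/-- The subsequence of an `Option`-valued sequence consisting of the values at the
indices satisfying `P`, in increasing order (`none` past the end when only finitely
many indices satisfy `P`). -/
noncomputable def subseq {α : Type*} (g : ℕ → Option α) (P : ℕ → Prop) : ℕ → Option α :=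
  fun k => if {i | P i}.Infinite ∨ k < {i | P i}.ncard then g (Nat.nth P k) else none

/-- The no-stutter trace of a sequence of labels (`none` marking positions past the end
of a finite sequence): the subsequence of those values at indices `i` such that `i = 0`
or the value differs from the one at `i - 1`. -/
noncomputable def nsTrace {α : Type*} (g : ℕ → Option α) : ℕ → Option α :=
  subseq g fun i => (g i).isSome ∧ (i = 0 ∨ g i ≠ g (i - 1))

/-- A (finite or infinite) path of a transition relation `Tr`.  `len` is the number of
transitions (`⊤` for an infinite path); the values of `states` and `acts` beyond the
length are irrelevant junk. -/
structure TPath {S : Type*} {A : Type*} (Tr : S → A → S → Prop) where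
  states : ℕ → S
  acts : ℕ → A
  len : ℕ∞
  valid : ∀ i : ℕ, (i : ℕ∞) < len → Tr (states i) (acts i) (states (i + 1))

/-- The sequence of state labels along a path (`none` beyond the end). -/
noncomputable def TPath.labelSeq {S A l : Type*}
    {Tr : S → A → S → Prop} (p : TPath Tr) (L : S → Set l) : ℕ → Option (Set l) :=
  fun i => if (i : ℕ∞) ≤ p.len then some (L (p.states i)) else none

/-- The sequence of actions along a path (`none` beyond the end). -/
noncomputable def TPath.actSeq {S A : Type*}
    {Tr : S → A → S → Prop} (p : TPath Tr) : ℕ → Option A :=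
  fun i => if (i : ℕ∞) < p.len then some (p.acts i) else none

/-- Stutter equivalence of two paths with respect to labellings `L₁`, `L₂`:
both are finite or both are infinite, and they have the same no-stutter trace. -/
def StutterEquiv {S₁ A₁ S₂ A₂ l : Type*}
    {Tr₁ : S₁ → A₁ → S₁ → Prop} {Tr₂ : S₂ → A₂ → S₂ → Prop}
    (L₁ : S₁ → Set l) (L₂ : S₂ → Set l) (p : TPath Tr₁) (q : TPath Tr₂) : Prop :=
  (p.len = ⊤ ↔ q.len = ⊤) ∧ nsTrace (p.labelSeq L₁) = nsTrace (q.labelSeq L₂)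

/-- Weak equivalence of two paths with respect to a set `I` of invisible actions:
both are finite or both are infinite, and the projections of their action sequences
onto the visible actions (those not in `I`) are equal. -/
def WeakEquiv {S₁ S₂ A : Type*}
    {Tr₁ : S₁ → A → S₁ → Prop} {Tr₂ : S₂ → A → S₂ → Prop}
    (I : Set A) (p : TPath Tr₁) (q : TPath Tr₂) : Prop :=
  (p.len = ⊤ ↔ q.len = ⊤) ∧
    subseq p.actSeq (fun i => (i : ℕ∞) < p.len ∧ p.acts i ∉ I) =
      subseq q.actSeq (fun i => (i : ℕ∞) < q.len ∧ q.acts i ∉ I)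

/-- A finite run of length `n` along `Tr`: `σ 0 -α 0→ σ 1 -α 1→ ⋯ -α (n-1)→ σ n`. -/
def FinRun {S A : Type*} (Tr : S → A → S → Prop) (n : ℕ) (σ : ℕ → S) (α : ℕ → A) : Prop :=
  ∀ i < n, Tr (σ i) (α i) (σ (i + 1))

/-- `a` is a key action in `s` w.r.t. the reduction function `r`: for all
`a₁, …, aₙ ∉ r s` and paths `s -a₁…aₙ→ s'`, the action `a` is enabled in `s'`. -/
def KeyAction {S A : Type*} (Tr : S → A → S → Prop) (r : S → Set A) (s : S) (a : A) : Prop :=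
  ∀ (n : ℕ) (σ : ℕ → S) (α : ℕ → A), σ 0 = s → FinRun Tr n σ α →
    (∀ i < n, α i ∉ r s) → ∃ t, Tr (σ n) a t

/-- Condition D0: if some action is enabled in `s`, then `r s` contains an enabled action. -/
def CondD0 {S A : Type*} (Tr : S → A → S → Prop) (r : S → Set A) (s : S) : Prop :=
  (∃ a t, Tr s a t) → ∃ a ∈ r s, ∃ t, Tr s a t

/-- Condition D1. -/
def CondD1 {S A : Type*} (Tr : S → A → S → Prop) (r : S → Set A) (s : S) : Prop :=
  ∀ a ∈ r s, ∀ (n : ℕ) (σ : ℕ → S) (α : ℕ → A) (sn' : S),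
    σ 0 = s → FinRun Tr n σ α → (∀ i < n, α i ∉ r s) → Tr (σ n) a sn' →
    ∃ σ' : ℕ → S, Tr s a (σ' 0) ∧ FinRun Tr n σ' α ∧ σ' n = sn'

/-- Condition D1' (strengthened D1): additionally, if `a` is invisible then
`sᵢ -a→ s'ᵢ` for every `1 ≤ i < n`. -/
def CondD1' {S A : Type*} (Tr : S → A → S → Prop) (I : Set A) (r : S → Set A) (s : S) : Prop :=
  ∀ a ∈ r s, ∀ (n : ℕ) (σ : ℕ → S) (α : ℕ → A) (sn' : S),
    σ 0 = s → FinRun Tr n σ α → (∀ i < n, α i ∉ r s) → Tr (σ n) a sn' →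
    ∃ σ' : ℕ → S, Tr s a (σ' 0) ∧ FinRun Tr n σ' α ∧ σ' n = sn' ∧
      (a ∈ I → ∀ i, 1 ≤ i → i < n → Tr (σ i) a (σ' i))

/-- Condition D2: every enabled action of `r s` is a key action in `s`. -/
def CondD2 {S A : Type*} (Tr : S → A → S → Prop) (r : S → Set A) (s : S) : Prop :=
  ∀ a ∈ r s, (∃ t, Tr s a t) → KeyAction Tr r s a

/-- Condition D2w: if some action is enabled in `s`, then `r s` contains a key action. -/
def CondD2w {S A : Type*} (Tr : S → A → S → Prop) (r : S → Set A) (s : S) : Prop :=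
  (∃ a t, Tr s a t) → ∃ a ∈ r s, KeyAction Tr r s a

/-- Condition V: if `r s` contains an enabled visible action, it contains all visible
actions. -/
def CondV {S A : Type*} (Tr : S → A → S → Prop) (I : Set A) (r : S → Set A) (s : S) : Prop :=
  (∃ a ∈ r s, a ∉ I ∧ ∃ t, Tr s a t) → ∀ a, a ∉ I → a ∈ r s

/-- Condition I: if an invisible action is enabled in `s`, then `r s` contains an
invisible key action. -/
def CondI {S A : Type*} (Tr : S → A → S → Prop) (I : Set A) (r : S → Set A) (s : S) : Prop :=
  (∃ a ∈ I, ∃ t, Tr s a t) → ∃ a ∈ r s, a ∈ I ∧ KeyAction Tr r s a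

/-- The states of the reduced LSTS: the smallest set of states containing the initial
state `s0` and closed under transitions labelled with actions of the stubborn set. -/
inductive RedReach {S A : Type*} (Tr : S → A → S → Prop) (r : S → Set A) (s0 : S) : S → Prop
  | refl : RedReach Tr r s0 s0
  | step {s a t} : RedReach Tr r s0 s → a ∈ r s → Tr s a t → RedReach Tr r s0 t

/-- The transition relation of the reduced LSTS. -/
def RedTr {S A : Type*} (Tr : S → A → S → Prop) (r : S → Set A) (s0 : S) :
    S → A → S → Prop :=
  fun s a t => RedReach Tr r s0 s ∧ a ∈ r s ∧ Tr s a t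

/-- Condition L: for every visible action `a`, every cycle in the reduced LSTS
contains a state `s` with `a ∈ r s`. -/
def CondL {S A : Type*} (Tr : S → A → S → Prop) (I : Set A) (r : S → Set A) (s0 : S) : Prop :=
  ∀ a ∉ I, ∀ (n : ℕ) (σ : ℕ → S) (α : ℕ → A), 0 < n →
    FinRun (RedTr Tr r s0) n σ α → σ n = σ 0 → ∃ i < n, a ∈ r (σ i)

/-- Condition C4: either `r s` consists of all actions, or `r s` contains precisely one
enabled action. -/
def CondC4 {S A : Type*} (Tr : S → A → S → Prop) (r : S → Set A) (s : S) : Prop :=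
  r s = Set.univ ∨ ∃! a, a ∈ r s ∧ ∃ t, Tr s a t

/-- `I` is a set of invisible actions w.r.t. the labelling `L`. -/
def InvisibleSet {S A l : Type*} (Tr : S → A → S → Prop) (L : S → Set l) (I : Set A) : Prop :=
  ∀ a ∈ I, ∀ s t, Tr s a t → L s = L t

/-- Reachability along `Tr`. -/
inductive Reach {S A : Type*} (Tr : S → A → S → Prop) (s0 : S) : S → Prop
  | refl : Reach Tr s0 s0
  | step {s a t} : Reach Tr s0 s → Tr s a t → Reach Tr s0 t

/-- Stutter-trace equivalence of two systems: for every initial path of the one there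
is a stutter equivalent initial path of the other, and vice versa. -/
def StutterTraceEquiv {S₁ A₁ S₂ A₂ l : Type*} (Tr₁ : S₁ → A₁ → S₁ → Prop) (i₁ : S₁)
    (L₁ : S₁ → Set l) (Tr₂ : S₂ → A₂ → S₂ → Prop) (i₂ : S₂) (L₂ : S₂ → Set l) : Prop :=
  (∀ p : TPath Tr₁, p.states 0 = i₁ →
      ∃ q : TPath Tr₂, q.states 0 = i₂ ∧ StutterEquiv L₁ L₂ p q) ∧
  (∀ q : TPath Tr₂, q.states 0 = i₂ →
      ∃ p : TPath Tr₁, p.states 0 = i₁ ∧ StutterEquiv L₁ L₂ p q)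

/-- Weak-trace equivalence of two systems with the same set `I` of invisible actions. -/
def WeakTraceEquiv {S₁ S₂ A : Type*} (Tr₁ : S₁ → A → S₁ → Prop) (i₁ : S₁)
    (Tr₂ : S₂ → A → S₂ → Prop) (i₂ : S₂) (I : Set A) : Prop :=
  (∀ p : TPath Tr₁, p.states 0 = i₁ → ∃ q : TPath Tr₂, q.states 0 = i₂ ∧ WeakEquiv I p q) ∧
  (∀ q : TPath Tr₂, q.states 0 = i₂ → ∃ p : TPath Tr₁, p.states 0 = i₁ ∧ WeakEquiv I p q)

/-- An LSTS is labelled consistently iff any two weakly equivalent paths starting in a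
common state are stutter equivalent. -/
def LabelledConsistently {S A l : Type*} (Tr : S → A → S → Prop) (L : S → Set l)
    (I : Set A) : Prop :=
  ∀ p q : TPath Tr, p.states 0 = q.states 0 → WeakEquiv I p q → StutterEquiv L L p q

/-- Label sequence of an explicitly given finite run with `n` transitions. -/
noncomputable def finLabelSeq {S l : Type*} (L : S → Set l) (n : ℕ) (σ : ℕ → S) :
    ℕ → Option (Set l) :=
  fun i => if i ≤ n then some (L (σ i)) else none

/-- Stutter equivalence of two explicitly given finite runs (with `n`, resp. `m`,
transitions); both are finite, so it only requires equality of no-stutter traces. -/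
def FinStutterEquiv {S l : Type*} (L : S → Set l) (n : ℕ) (σ : ℕ → S) (m : ℕ)
    (τ : ℕ → S) : Prop :=
  nsTrace (finLabelSeq L n σ) = nsTrace (finLabelSeq L m τ)

/-- Stutter equivalence of two explicitly given infinite runs; both are infinite, so it
only requires equality of no-stutter traces. -/
def InfStutterEquiv {S l : Type*} (L : S → Set l) (σ τ : ℕ → S) : Prop :=
  nsTrace (fun i => some (L (σ i))) = nsTrace (fun i => some (L (τ i)))

/-!
Deferring the visible action `b` behind the invisible action `a` may change the labels at
intermediate states. In the following system, whose states `s1` and `t1` carry the proposition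
and whose state `v` (drawn twice) has a `b`-loop, the stubborn set `{a}` at `s0` satisfies D1:

    v ←a─ s0 ─a→ t0
          ↓b     ↓b
          s1 ─a→ t1
          ↓b
    v ←a─ s2

D1 matches the run `b, a` through `t0` but the run `b, b, a` through `v`. No single `a`-successor
of `s0` follows the whole run `s0, s1, s2`, whose label is off, on, off: once the reduced system has
done `a`, the label either turns on at `t1` for good or, at `v`, stays off.
-/

section Sequences

variable {α : Type*} {g : ℕ → Option α} {P : ℕ → Prop}

theorem subseq_eq_of_forall_le {n : ℕ} (h : ∀ i ≤ n, P i) : subseq g P n = g n := by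
  have hsub : Set.Iic n ⊆ {i | P i} := h
  have hcard : {i | P i}.Infinite ∨ n < {i | P i}.ncard := by
    refine {i | P i}.finite_or_infinite.symm.imp_right fun hfin => ?_
    simpa using Set.ncard_le_ncard hsub hfin
  rw [subseq, if_pos hcard, Nat.nth_of_forall h]

theorem exists_lt_of_subseq_eq_some {k l : ℕ} (hkl : k < l) {x y : α}
    (hx : subseq g P k = some x) (hy : subseq g P l = some y) :
    ∃ i j, i < j ∧ g i = some x ∧ g j = some y := by
  obtain ⟨-, hx⟩ := Option.ite_none_right_eq_some.mp hx
  obtain ⟨hl, hy⟩ := Option.ite_none_right_eq_some.mp hy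
  have hcard (hfin : {i | P i}.Finite) : l < hfin.toFinset.card :=
    Set.ncard_eq_toFinset_card _ hfin ▸ hl.resolve_left (not_not.mpr hfin)
  exact ⟨_, _, Nat.nth_lt_nth' hkl hcard, hx, hy⟩

theorem nsTrace_eq_of_forall_ne {n : ℕ} (hsome : ∀ i ≤ n, (g i).isSome)
    (hne : ∀ i < n, g (i + 1) ≠ g i) : nsTrace g n = g n := by
  refine subseq_eq_of_forall_le fun i hi => ⟨hsome i hi, ?_⟩
  cases i with
  | zero => exact .inl rfl
  | succ i => exact .inr (hne i hi)

end Sequences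

namespace TPath

variable {S A l : Type*} {Tr : S → A → S → Prop} {p : TPath Tr} {L : S → Set l}

theorem labelSeq_eq_some_iff {i : ℕ} {x : Set l} :
    p.labelSeq L i = some x ↔ (i : ℕ∞) ≤ p.len ∧ L (p.states i) = x := by
  simp only [labelSeq, Option.ite_none_right_eq_some, Option.some.injEq]

theorem nsTrace_labelSeq_of_forall_ne {n : ℕ} (hn : (n : ℕ∞) ≤ p.len)
    (hne : ∀ i < n, L (p.states (i + 1)) ≠ L (p.states i)) :
    nsTrace (p.labelSeq L) n = some (L (p.states n)) := by
  have hlabel (i : ℕ) (hi : i ≤ n) : p.labelSeq L i = some (L (p.states i)) :=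
    labelSeq_eq_some_iff.mpr ⟨(Nat.cast_le.mpr hi).trans hn, rfl⟩
  rw [nsTrace_eq_of_forall_ne (fun i hi => by simp [hlabel i hi]), hlabel n le_rfl]
  intro i hi
  simpa [hlabel (i + 1) hi, hlabel i hi.le] using hne i hi

theorem invariant_of_le {P : S → Prop} (hP : ∀ s a t, Tr s a t → P s → P t) {i j : ℕ}
    (hij : i ≤ j) (hj : (j : ℕ∞) ≤ p.len) (hi : P (p.states i)) : P (p.states j) := by
  induction j, hij using Nat.le_induction with
  | base => exact hi
  | succ j _ ih =>
    have hlt : (j : ℕ∞) < p.len := (Nat.cast_lt.mpr j.lt_succ_self).trans_le hj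
    exact hP _ _ _ (p.valid j hlt) (ih hlt.le)

end TPath

theorem StutterEquiv.exists_lt_label_eq {S₁ A₁ S₂ A₂ l : Type*} {Tr₁ : S₁ → A₁ → S₁ → Prop}
    {Tr₂ : S₂ → A₂ → S₂ → Prop} {L₁ : S₁ → Set l} {L₂ : S₂ → Set l} {p : TPath Tr₁}
    {q : TPath Tr₂} (h : StutterEquiv L₁ L₂ p q) {n : ℕ} (hn : (n : ℕ∞) ≤ q.len)
    (hne : ∀ i < n, L₂ (q.states (i + 1)) ≠ L₂ (q.states i)) {m : ℕ} (hmn : m < n) :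
    ∃ i j : ℕ, i < j ∧ (j : ℕ∞) ≤ p.len ∧ L₁ (p.states i) = L₂ (q.states m) ∧
      L₁ (p.states j) = L₂ (q.states n) := by
  have hm : nsTrace (p.labelSeq L₁) m = some (L₂ (q.states m)) :=
    h.2 ▸ q.nsTrace_labelSeq_of_forall_ne ((Nat.cast_le.mpr hmn.le).trans hn)
      fun i hi => hne i (hi.trans hmn)
  have hn' : nsTrace (p.labelSeq L₁) n = some (L₂ (q.states n)) :=
    h.2 ▸ q.nsTrace_labelSeq_of_forall_ne hn hne
  obtain ⟨i, j, hij, hi, hj⟩ := exists_lt_of_subseq_eq_some hmn hm hn'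
  rw [TPath.labelSeq_eq_some_iff] at hi hj
  exact ⟨i, j, hij, hj.1, hi.2, hj.2⟩

section StubbornConditions

variable {S A : Type*} {Tr : S → A → S → Prop} {I : Set A} {r : S → Set A} {s : S}

theorem eq_zero_of_forall_notMem_of_eq_univ (hr : r s = Set.univ) {n : ℕ} {α : ℕ → A}
    (hα : ∀ i < n, α i ∉ r s) : n = 0 :=
  Nat.eq_zero_of_not_pos fun hn => hα 0 hn (hr ▸ Set.mem_univ _)

theorem keyAction_of_eq_univ (hr : r s = Set.univ) {a : A} (ha : ∃ t, Tr s a t) :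
    KeyAction Tr r s a := by
  rintro n σ α rfl - hα
  obtain rfl := eq_zero_of_forall_notMem_of_eq_univ hr hα
  exact ha

theorem condD1_of_eq_univ (hr : r s = Set.univ) : CondD1 Tr r s := by
  rintro a - n σ α x rfl - hα hx
  obtain rfl := eq_zero_of_forall_notMem_of_eq_univ hr hα
  exact ⟨fun _ => x, hx, fun i hi => absurd hi i.not_lt_zero, rfl⟩

theorem condD2w_of_eq_univ (hr : r s = Set.univ) : CondD2w Tr r s :=
  fun ⟨a, ha⟩ => ⟨a, hr ▸ Set.mem_univ a, keyAction_of_eq_univ hr ha⟩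

theorem condV_of_eq_univ (hr : r s = Set.univ) : CondV Tr I r s :=
  fun _ a _ => hr ▸ Set.mem_univ a

theorem condV_of_subset (h : r s ⊆ I) : CondV Tr I r s :=
  fun ⟨_, ha, haI, _⟩ => absurd (h ha) haI

theorem condI_of_eq_univ (hr : r s = Set.univ) : CondI Tr I r s :=
  fun ⟨a, haI, ha⟩ => ⟨a, hr ▸ Set.mem_univ a, haI, keyAction_of_eq_univ hr ha⟩

theorem condL_of_forall_target_eq_univ (hr : ∀ s a t, Tr s a t → r t = Set.univ) (s0 : S) :
    CondL Tr I r s0 := by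
  intro a _ n σ α hn hrun hcycle
  have hlast := (hrun (n - 1) (Nat.sub_one_lt_of_lt hn)).2.2
  rw [Nat.sub_one_add_one hn.ne', hcycle] at hlast
  exact ⟨0, hn, hr _ _ _ hlast ▸ Set.mem_univ a⟩

end StubbornConditions

namespace D1Counterexample

/-- The states of the counterexample. The states `t0` and `v` are the two `a`-successors of the
initial state `s0`. -/
inductive State
  | s0 | s1 | s2 | t0 | t1 | v

/-- The actions of the counterexample: `a` is invisible and `b` is visible. -/
inductive Action
  | a | b

/-- The transition relation of the counterexample. -/
inductive Step : State → Action → State → Prop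
  | s0_b_s1 : Step .s0 .b .s1
  | s1_b_s2 : Step .s1 .b .s2
  | s0_a_t0 : Step .s0 .a .t0
  | s0_a_v : Step .s0 .a .v
  | s1_a_t1 : Step .s1 .a .t1
  | s2_a_v : Step .s2 .a .v
  | t0_b_t1 : Step .t0 .b .t1
  | v_b_v : Step .v .b .v

/-- The labelling of the counterexample; the type `Unit` of atomic propositions has a single
element, so that `Set.univ` and `∅` are the only labels. -/
def label : State → Set Unit
  | .s1 | .t1 => Set.univ
  | _ => ∅

/-- The reduction function of the counterexample, which prunes only the visible action at the
initial state. -/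
def stubborn : State → Set Action
  | .s0 => {.a}
  | _ => Set.univ

theorem stubborn_eq_univ {s : State} (hs : s ≠ .s0) : stubborn s = Set.univ := by
  cases s <;> first | rfl | exact absurd rfl hs

theorem stubborn_target_eq_univ (s : State) (c : Action) (t : State) (h : Step s c t) :
    stubborn t = Set.univ := by
  cases h <;> rfl

theorem eq_b_of_notMem_stubborn_s0 {c : Action} (hc : c ∉ stubborn .s0) : c = .b := by
  cases c with
  | a => exact absurd rfl hc
  | b => rfl

theorem invisibleSet_a : InvisibleSet Step label {.a} := by
  rintro _ rfl s t h
  cases h <;> rfl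

theorem finRun_b_from_s0 {n : ℕ} {σ : ℕ → State} (h0 : σ 0 = .s0)
    (hrun : FinRun Step n σ fun _ => .b) :
    n = 0 ∧ σ n = .s0 ∨ n = 1 ∧ σ n = .s1 ∨ n = 2 ∧ σ n = .s2 := by
  induction n with
  | zero => exact .inl ⟨rfl, h0⟩
  | succ n ih =>
    have hstep := hrun n n.lt_succ_self
    generalize σ (n + 1) = x at hstep ⊢
    rcases ih fun i hi => hrun i (hi.trans n.lt_succ_self) with ⟨rfl, h⟩ | ⟨rfl, h⟩ | ⟨rfl, h⟩ <;>
      rw [h] at hstep <;> cases hstep <;> simp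

theorem finRun_avoiding_stubborn_s0 {n : ℕ} {σ : ℕ → State} {α : ℕ → Action} (h0 : σ 0 = .s0)
    (hrun : FinRun Step n σ α) (hα : ∀ i < n, α i ∉ stubborn .s0) :
    n = 0 ∧ σ n = .s0 ∨ n = 1 ∧ σ n = .s1 ∨ n = 2 ∧ σ n = .s2 :=
  finRun_b_from_s0 h0 fun i hi => eq_b_of_notMem_stubborn_s0 (hα i hi) ▸ hrun i hi

theorem keyAction_s0_a : KeyAction Step stubborn .s0 .a := by
  intro n σ α h0 hrun hα
  obtain ⟨-, h⟩ | ⟨-, h⟩ | ⟨-, h⟩ := finRun_avoiding_stubborn_s0 h0 hrun hα <;> rw [h]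
  · exact ⟨_, .s0_a_v⟩
  · exact ⟨_, .s1_a_t1⟩
  · exact ⟨_, .s2_a_v⟩

theorem condD1_s0 : CondD1 Step stubborn .s0 := by
  rintro _ rfl n σ α x h0 hrun hα hx
  have hb (i : ℕ) (hi : i < n) : α i = .b := eq_b_of_notMem_stubborn_s0 (hα i hi)
  obtain ⟨rfl, h⟩ | ⟨rfl, h⟩ | ⟨rfl, h⟩ := finRun_avoiding_stubborn_s0 h0 hrun hα <;> rw [h] at hx
  · exact ⟨fun _ => x, hx, fun i hi => absurd hi i.not_lt_zero, rfl⟩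
  · cases hx
    refine ⟨fun | 0 => .t0 | _ => .t1, .s0_a_t0, fun i hi => ?_, rfl⟩
    obtain rfl := Nat.lt_one_iff.mp hi
    exact hb 0 hi ▸ .t0_b_t1
  · cases hx
    exact ⟨fun _ => .v, .s0_a_v, fun i hi => hb i hi ▸ .v_b_v, rfl⟩

theorem stubborn_conditions (s : State) :
    CondD1 Step stubborn s ∧ CondD2w Step stubborn s ∧ CondV Step {.a} stubborn s ∧
      CondI Step {.a} stubborn s := by
  by_cases hs : s = .s0
  · subst hs
    exact ⟨condD1_s0, fun _ => ⟨.a, rfl, keyAction_s0_a⟩, condV_of_subset subset_rfl,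
      fun _ => ⟨.a, rfl, rfl, keyAction_s0_a⟩⟩
  · have hr := stubborn_eq_univ hs
    exact ⟨condD1_of_eq_univ hr, condD2w_of_eq_univ hr, condV_of_eq_univ hr, condI_of_eq_univ hr⟩

theorem setOf_redReach_subset :
    {s | RedReach Step stubborn .s0 s} ⊆ ({.s0, .t0, .t1, .v} : Set State) := by
  intro s hs
  induction hs with
  | refl => simp
  | step _ ha hstep ih => cases hstep <;> simp_all [stubborn]

theorem label_eq_univ_of_redTr (s : State) (c : Action) (t : State)
    (h : RedTr Step stubborn .s0 s c t) (hs : label s = Set.univ) : label t = Set.univ := by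
  obtain ⟨hreach, -, hstep⟩ := h
  have hmem := setOf_redReach_subset hreach
  cases hstep <;> simp_all [label]

/-- The path `s0 -b→ s1 -b→ s2` of the full system, which the reduced system cannot match. -/
def prunedPath : TPath Step where
  states | 0 => .s0 | 1 => .s1 | _ => .s2
  acts _ := .b
  len := 2
  valid
    | 0, _ => .s0_b_s1
    | 1, _ => .s1_b_s2
    | i + 2, hi => absurd (Nat.cast_lt_ofNat.mp hi) (Nat.le_add_left 2 i).not_gt

theorem label_prunedPath_ne (i : ℕ) (hi : i < 2) :
    label (prunedPath.states (i + 1)) ≠ label (prunedPath.states i) := by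
  interval_cases i <;> simp [prunedPath, label, Set.empty_ne_univ]

theorem not_stutterTraceEquiv :
    ¬ StutterTraceEquiv (RedTr Step stubborn .s0) .s0 label Step .s0 label := by
  rintro ⟨-, h⟩
  obtain ⟨p, -, hp⟩ := h prunedPath rfl
  obtain ⟨i, j, hij, hj, hi_on, hj_off⟩ :=
    hp.exists_lt_label_eq (n := 2) le_rfl label_prunedPath_ne one_lt_two
  have hj_on : label (p.states j) = Set.univ :=
    p.invariant_of_le label_eq_univ_of_redTr hij.le hj hi_on
  exact Set.empty_ne_univ (hj_off.symm.trans hj_on)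

end D1Counterexample

/-- There exists an LSTS `TS` (with one atomic proposition) and a weak
stubborn set `r` (a reduction function satisfying D1, D2w, V, I and L at every state,
with finite reduced LSTS) such that the reduced LSTS `TS_r` is not stutter-trace
equivalent to `TS`. -/
theorem weak_stubborn_sets_with_D1_do_not_preserve_stutter_trace_equivalence :
    ∃ (S A : Type) (Tr : S → A → S → Prop) (s0 : S) (L : S → Set Unit) (I : Set A)
      (r : S → Set A),
      InvisibleSet Tr L I ∧
      (∀ s, CondD1 Tr r s ∧ CondD2w Tr r s ∧ CondV Tr I r s ∧ CondI Tr I r s) ∧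
      CondL Tr I r s0 ∧
      {s | RedReach Tr r s0 s}.Finite ∧
      ¬ StutterTraceEquiv (RedTr Tr r s0) s0 L Tr s0 L := by
  open D1Counterexample in
  exact ⟨State, Action, Step, .s0, label, {.a}, stubborn, invisibleSet_a, stubborn_conditions,
    condL_of_forall_target_eq_univ stubborn_target_eq_univ .s0,
    (Set.toFinite _).subset setOf_redReach_subset, not_stutterTraceEquiv⟩
end

section
/- Let r be a weak stubborn set (satisfying D1', D2w, V, I, L) on an LSTS and let π = s0 -a1→ … -an→ sn -a→ s'n be a path such that a1,…,an ∉ r(s0) and a ∈ r(s0). Then there is a path π' = s0 -a→ s'0 -a1→ … -an→ s'n, whose first transition is in the reduced LSTS when s0 is a state of the reduced LSTS, such that π and π' are stutter equivalent. -/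
open scoped Classical

/-!
Stuttering is reindexing along a monotone surjection `ℕ → ℕ`, and this leaves the no-stutter
trace unchanged. If `a` is invisible, D1' gives `a`-transitions between corresponding states of
the two runs; both paths then carry the labels of `σ`, with one label repeated (the last one for
`π`, the first one for `π'`). If `a` is visible, V forces all `α i` to be invisible, so both
paths have at most one label change, along `a`: their label sequences are `x ⋯ x y` and
`x y ⋯ y`.
-/

theorem subseq_comp_of_strictMono {β : Type*} (g : ℕ → Option β) {P : ℕ → Prop} {ψ : ℕ → ℕ}
    (hψ : StrictMono ψ) (hP : ∀ i, P i → i ∈ Set.range ψ) :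
    subseq (g ∘ ψ) (P ∘ ψ) = subseq g P := by
  have himage : {i | P i} = ψ '' {j | P (ψ j)} :=
    (Set.image_preimage_eq_of_subset hP).symm
  have hinf : {i | P i}.Infinite ↔ {j | P (ψ j)}.Infinite := by
    rw [himage, Set.infinite_image_iff hψ.injective.injOn]
  have hcard : {i | P i}.ncard = {j | P (ψ j)}.ncard := by
    rw [himage, Set.ncard_image_of_injective _ hψ.injective]
  funext k
  simp only [subseq, hinf, hcard, Function.comp_apply]
  split_ifs with hk
  · congr 1
    refine Nat.nth_comp_of_strictMono hψ hP fun hfin => ?_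
    rw [← Set.ncard_eq_toFinset_card _ hfin]
    exact (hk.resolve_left fun h => hinf.2 h hfin).trans_eq hcard.symm
  · rfl

theorem exists_galoisConnection_of_monotone {β γ : Type*} [LinearOrder β] [WellFoundedLT β]
    [Preorder γ] {φ : β → γ} (hmono : Monotone φ) (hcofinal : ∀ c, ∃ b, c ≤ φ b) :
    ∃ ψ : γ → β, GaloisConnection ψ φ := by
  choose ψ hψ using fun c => exists_minimal_of_wellFoundedLT (c ≤ φ ·) (hcofinal c)
  exact ⟨ψ, fun c b => ⟨fun hb => (hψ c).prop.trans (hmono hb),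
    fun hc => not_lt.1 fun hlt => (hψ c).not_prop_of_lt hlt hc⟩⟩

theorem rightInverse_of_galoisConnection {β γ : Type*} [Preorder β] [PartialOrder γ] {φ : β → γ}
    {ψ : γ → β} (hgc : GaloisConnection ψ φ) (hsurj : Function.Surjective φ) :
    Function.RightInverse ψ φ :=
  hsurj.forall.2 hgc.u_l_u_eq_u

section Reindexing

variable {φ ψ : ℕ → ℕ}

theorem apply_pred_eq_pred_of_galoisConnection (hgc : GaloisConnection ψ φ)
    (hsurj : Function.Surjective φ) (j : ℕ) : φ (ψ j - 1) = j - 1 := by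
  have hφψ := rightInverse_of_galoisConnection hgc hsurj
  rcases eq_or_ne j 0 with rfl | hj
  · have hψ0 : ψ 0 = 0 := hgc.l_bot
    simpa only [hψ0] using hφψ 0
  · have hlt : ψ (j - 1) < ψ j := hgc.lt_iff_lt.2 (by rw [hφψ]; omega)
    have hle : j - 1 ≤ φ (ψ j - 1) := (hgc _ _).1 (by omega)
    have hgt : φ (ψ j - 1) < j := hgc.lt_iff_lt.1 (by omega)
    omega

theorem mem_range_of_galoisConnection (hgc : GaloisConnection ψ φ) {i : ℕ}
    (hi : i = 0 ∨ φ i ≠ φ (i - 1)) : i ∈ Set.range ψ := by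
  refine ⟨φ i, le_antisymm (hgc.l_u_le i) ?_⟩
  rcases hi with rfl | hne
  · exact Nat.zero_le _
  · have hlt : i - 1 < ψ (φ i) :=
      hgc.lt_iff_lt.2 ((hgc.monotone_u (Nat.sub_le i 1)).lt_of_ne' hne)
    omega

/-- The lower adjoint of `φ` sends `j` to the first index of the block where `φ` is `j`, and only
such first indices can contribute to the no-stutter trace of `g ∘ φ`. -/
theorem nsTrace_comp_of_monotone_surjective {β : Type*} (g : ℕ → Option β)
    (hmono : Monotone φ) (hsurj : Function.Surjective φ) : nsTrace (g ∘ φ) = nsTrace g := by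
  obtain ⟨ψ, hgc⟩ :=
    exists_galoisConnection_of_monotone hmono fun j => (hsurj j).imp fun _ hi => hi.ge
  have hφψ := rightInverse_of_galoisConnection hgc hsurj
  have hψ : StrictMono ψ := hgc.monotone_l.strictMono_of_injective hφψ.injective
  let P : ℕ → Prop := fun i => (g (φ i)).isSome ∧ (i = 0 ∨ g (φ i) ≠ g (φ (i - 1)))
  have hrange (i : ℕ) (hi : P i) : i ∈ Set.range ψ :=
    mem_range_of_galoisConnection hgc (hi.2.imp_right fun hne h => hne (congrArg g h))
  have hcomp : P ∘ ψ = fun j => (g j).isSome ∧ (j = 0 ∨ g j ≠ g (j - 1)) := by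
    have hψ0 (j : ℕ) : ψ j = 0 ↔ j = 0 := hψ.injective.eq_iff' hgc.l_bot
    funext j
    simp only [P, Function.comp_apply, hφψ j, hψ0,
      apply_pred_eq_pred_of_galoisConnection hgc hsurj]
  calc nsTrace (g ∘ φ) = subseq ((g ∘ φ) ∘ ψ) (P ∘ ψ) :=
        (subseq_comp_of_strictMono _ hψ hrange).symm
    _ = nsTrace g := by
        rw [hcomp, Function.comp_assoc, hφψ.comp_eq_id, Function.comp_id, nsTrace]

end Reindexing

section FinStutterEquiv

variable {S l : Type*} {L : S → Set l} {n m : ℕ} {σ τ : ℕ → S}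

theorem finStutterEquiv_of_monotone_surjective {φ : ℕ → ℕ} (hmono : Monotone φ)
    (hsurj : Function.Surjective φ) (hlen : ∀ i, φ i ≤ m ↔ i ≤ n)
    (hL : ∀ i ≤ n, L (σ i) = L (τ (φ i))) : FinStutterEquiv L n σ m τ := by
  have hcomp : finLabelSeq L n σ = finLabelSeq L m τ ∘ φ := by
    funext i
    simp only [finLabelSeq, Function.comp_apply, hlen]
    split_ifs with hi
    · rw [hL i hi]
    · rfl
  exact (congrArg nsTrace hcomp).trans (nsTrace_comp_of_monotone_surjective _ hmono hsurj)

theorem finStutterEquiv_of_forall_label_eq (hL : ∀ i ≤ n, L (σ i) = L (τ i)) :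
    FinStutterEquiv L n σ n τ :=
  finStutterEquiv_of_monotone_surjective monotone_id Function.surjective_id
    (fun _ => Iff.rfl) hL

theorem finStutterEquiv_snoc {t : S} (ht : L t = L (σ n)) :
    FinStutterEquiv L (n + 1) (fun i => if i ≤ n then σ i else t) n σ := by
  let φ : ℕ → ℕ := fun i => if i ≤ n then i else i - 1
  have hmono : Monotone φ := fun i j hij => by grind
  have hsurj : Function.Surjective φ := fun j => ⟨if j ≤ n then j else j + 1, by grind⟩
  have hlen (i : ℕ) : φ i ≤ n ↔ i ≤ n + 1 := by grind
  refine finStutterEquiv_of_monotone_surjective hmono hsurj hlen fun i hi => ?_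
  obtain hi' | rfl : i ≤ n ∨ i = n + 1 := by omega
  · simp [φ, hi']
  · simp [φ, ht]

theorem finStutterEquiv_cons {s : S} (hs : L s = L (τ 0)) :
    FinStutterEquiv L (n + 1) (fun i => if i = 0 then s else τ (i - 1)) n τ := by
  refine finStutterEquiv_of_monotone_surjective (φ := (· - 1))
    (fun i j hij => Nat.sub_le_sub_right hij 1) (fun j => ⟨j + 1, rfl⟩)
    (fun i => Nat.sub_le_iff_le_add) (fun i _ => ?_)
  rcases eq_or_ne i 0 with rfl | hi
  · simpa using hs
  · simp [hi]

theorem finStutterEquiv_of_two_blocks {k : ℕ} (hk : k < n) {s t : S}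
    (hs : ∀ i ≤ k, L (σ i) = L s) (ht : ∀ i, k < i → i ≤ n → L (σ i) = L t) :
    FinStutterEquiv L n σ 1 (fun i => if i = 0 then s else t) := by
  let φ : ℕ → ℕ := fun i => if i ≤ k then 0 else i - n + 1
  have hmono : Monotone φ := fun i j hij => by grind
  have hsurj : Function.Surjective φ := fun j => ⟨if j = 0 then 0 else n + (j - 1), by grind⟩
  have hlen (i : ℕ) : φ i ≤ 1 ↔ i ≤ n := by grind
  refine finStutterEquiv_of_monotone_surjective hmono hsurj hlen fun i hi => ?_
  rcases le_or_gt i k with hik | hki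
  · simp [φ, hik, hs i hik]
  · simp [φ, hki.not_ge, ht i hki hi]

end FinStutterEquiv

section Labels

variable {S A l : Type*} {Tr : S → A → S → Prop} {L : S → Set l} {I : Set A}
  {n : ℕ} {σ τ : ℕ → S} {α β : ℕ → A}

theorem InvisibleSet.label_eq_of_finRun (hI : InvisibleSet Tr L I) (hrun : FinRun Tr n σ α)
    (hα : ∀ i < n, α i ∈ I) : ∀ i ≤ n, L (σ i) = L (σ 0) := by
  intro i hi
  induction i with
  | zero => rfl
  | succ i ih => exact (hI _ (hα i hi) _ _ (hrun i hi)).symm.trans (ih (Nat.le_of_lt hi))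

theorem CondV.mem_invisible_of_notMem {r : S → Set A} {s t : S} {a b : A}
    (hV : CondV Tr I r s) (ha : a ∈ r s) (haI : a ∉ I) (hat : Tr s a t) (hb : b ∉ r s) :
    b ∈ I :=
  not_not.1 fun hbI => hb (hV ⟨a, ha, haI, t, hat⟩ b hbI)

theorem CondD1'.exists_forall_transition {r : S → Set A} {a : A} {t : S}
    (hD1 : CondD1' Tr I r (σ 0)) (ha : a ∈ r (σ 0)) (hrun : FinRun Tr n σ α)
    (hnr : ∀ i < n, α i ∉ r (σ 0)) (hlast : Tr (σ n) a t) :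
    ∃ τ : ℕ → S, Tr (σ 0) a (τ 0) ∧ FinRun Tr n τ α ∧ τ n = t ∧
      (a ∈ I → ∀ i ≤ n, Tr (σ i) a (τ i)) := by
  obtain ⟨τ, hfirst, hτ, rfl, hinner⟩ := hD1 a ha n σ α t rfl hrun hnr hlast
  refine ⟨τ, hfirst, hτ, rfl, fun haI i hi => ?_⟩
  rcases Nat.eq_zero_or_pos i with rfl | hpos
  · exact hfirst
  · rcases hi.eq_or_lt with rfl | hlt
    · exact hlast
    · exact hinner haI i hpos hlt

theorem InvisibleSet.finStutterEquiv_of_forall_transition (hI : InvisibleSet Tr L I) {a : A}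
    (ha : a ∈ I) (htr : ∀ i ≤ n, Tr (σ i) a (τ i)) :
    FinStutterEquiv L (n + 1) (fun i => if i ≤ n then σ i else τ n)
      (n + 1) (fun i => if i = 0 then σ 0 else τ (i - 1)) := by
  have hL (i : ℕ) (hi : i ≤ n) : L (σ i) = L (τ i) := hI a ha _ _ (htr i hi)
  calc
    _ = nsTrace (finLabelSeq L n σ) := finStutterEquiv_snoc (hL n le_rfl).symm
    _ = nsTrace (finLabelSeq L n τ) := finStutterEquiv_of_forall_label_eq hL
    _ = _ := (finStutterEquiv_cons (hL 0 n.zero_le)).symm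

theorem InvisibleSet.finStutterEquiv_of_invisible_runs (hI : InvisibleSet Tr L I)
    (hσ : FinRun Tr n σ α) (hα : ∀ i < n, α i ∈ I)
    (hτ : FinRun Tr n τ β) (hβ : ∀ i < n, β i ∈ I) :
    FinStutterEquiv L (n + 1) (fun i => if i ≤ n then σ i else τ n)
      (n + 1) (fun i => if i = 0 then σ 0 else τ (i - 1)) := by
  have hLσ := hI.label_eq_of_finRun hσ hα
  have hLτ := hI.label_eq_of_finRun hτ hβ
  have hsnoc : FinStutterEquiv L (n + 1) (fun i => if i ≤ n then σ i else τ n)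
      1 (fun i => if i = 0 then σ 0 else τ 0) := by
    refine finStutterEquiv_of_two_blocks n.lt_succ_self (fun i hi => ?_) (fun i hi _ => ?_)
    · simp [hi, hLσ i hi]
    · simp [hi.not_ge, hLτ n le_rfl]
  have hcons : FinStutterEquiv L (n + 1) (fun i => if i = 0 then σ 0 else τ (i - 1))
      1 (fun i => if i = 0 then σ 0 else τ 0) := by
    refine finStutterEquiv_of_two_blocks n.succ_pos (fun i hi => ?_) (fun i hi hin => ?_)
    · simp [Nat.le_zero.1 hi]
    · simp [hi.ne', hLτ (i - 1) (by omega)]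
  exact hsnoc.trans hcons.symm

end Labels

theorem shift_action_forward_general {S A l : Type*} {Tr : S → A → S → Prop} (s0 : S)
    {L : S → Set l} {I : Set A} (hI : InvisibleSet Tr L I) {r : S → Set A}
    {n : ℕ} {σ : ℕ → S} {α : ℕ → A} {a : A} {sn' : S}
    (hD1 : CondD1' Tr I r (σ 0)) (hV : CondV Tr I r (σ 0))
    (hrun : FinRun Tr n σ α) (hnr : ∀ i < n, α i ∉ r (σ 0)) (ha : a ∈ r (σ 0))
    (hlast : Tr (σ n) a sn') :
    ∃ σ' : ℕ → S, Tr (σ 0) a (σ' 0) ∧ FinRun Tr n σ' α ∧ σ' n = sn' ∧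
      (RedReach Tr r s0 (σ 0) → RedTr Tr r s0 (σ 0) a (σ' 0)) ∧
      FinStutterEquiv L (n + 1) (fun i => if i ≤ n then σ i else sn')
        (n + 1) (fun i => if i = 0 then σ 0 else σ' (i - 1)) := by
  obtain ⟨σ', hfirst, hrun', rfl, htr⟩ :=
    hD1.exists_forall_transition ha hrun hnr hlast
  refine ⟨σ', hfirst, hrun', rfl, fun hreach => ⟨hreach, ha, hfirst⟩, ?_⟩
  by_cases haI : a ∈ I
  · exact hI.finStutterEquiv_of_forall_transition haI (htr haI)
  · have hα (i : ℕ) (hi : i < n) : α i ∈ I :=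
      hV.mem_invisible_of_notMem ha haI hfirst (hnr i hi)
    exact hI.finStutterEquiv_of_invisible_runs hrun hα hrun' hα

/-- Lemma "shift action forward": Let `r` be a weak stubborn set
(satisfying D1', D2w, V, I, L) on an LSTS and let `π = σ 0 -α 0→ … -α (n-1)→ σ n -a→ sn'`
be a path such that `α 0, …, α (n-1) ∉ r (σ 0)` and `a ∈ r (σ 0)`.  Then there is a path
`π' = σ 0 -a→ σ' 0 -α 0→ … -α (n-1)→ σ' n` with `σ' n = sn'`, whose first transition is
in the reduced LSTS when `σ 0` is a state of the reduced LSTS, such that `π` and `π'`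
are stutter equivalent. -/
theorem shift_action_forward {S A l : Type*} (Tr : S → A → S → Prop) (s0 : S)
    (L : S → Set l) (I : Set A) (hI : InvisibleSet Tr L I) (r : S → Set A)
    (hstub : ∀ s, CondD1' Tr I r s ∧ CondD2w Tr r s ∧ CondV Tr I r s ∧ CondI Tr I r s)
    (hcondL : CondL Tr I r s0)
    (n : ℕ) (σ : ℕ → S) (α : ℕ → A) (a : A) (sn' : S)
    (hrun : FinRun Tr n σ α) (hnr : ∀ i < n, α i ∉ r (σ 0)) (ha : a ∈ r (σ 0))
    (hlast : Tr (σ n) a sn') :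
    ∃ σ' : ℕ → S, Tr (σ 0) a (σ' 0) ∧ FinRun Tr n σ' α ∧ σ' n = sn' ∧
      (RedReach Tr r s0 (σ 0) → RedTr Tr r s0 (σ 0) a (σ' 0)) ∧
      FinStutterEquiv L (n + 1) (fun i => if i ≤ n then σ i else sn')
        (n + 1) (fun i => if i = 0 then σ 0 else σ' (i - 1)) :=
  shift_action_forward_general s0 hI (hstub (σ 0)).1 (hstub (σ 0)).2.2.1 hrun hnr ha hlast
end

section
/- Given an LSTS TS and a weak or strong stubborn set r in which condition D1 is replaced by the strengthened condition D1', and whose reduced LSTS TS_r has finitely many states, the reduced LSTS TS_r is stutter-trace equivalent to TS. -/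
open scoped Classical

/-!
A path of the full system is simulated in the reduced one step by step, keeping a state of the
reduced system from which the remaining behaviour can still be performed. If no action of that
behaviour is stubborn, D2w, V and I provide an invisible key action that can be executed in front
of it. Otherwise D1' allows the first stubborn action to be moved to the front: if it is
invisible, D1' relates the old and the new run by invisible transitions, so their labels agree; if
it is visible, then by V all actions it overtakes are invisible. In either case the no-stutter
trace is preserved. The execution of a transition may lead to different states for different finite
prefixes of the behaviour, but since the reduced system is finite, some state serves all of them.

It remains to see that no label change is postponed forever. While the label does not change, the
first visible action that changes it never moves further away, and if it stays at its position then
it is not stubborn in the current state. By condition L this cannot happen along a cycle, hence,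
again by finiteness, it happens only finitely often in a row.
-/

section NoStutter

variable {α : Type*} {u v : ℕ → α} {c : α} {n : ℕ}

/-- The no-stutter trace of the finite sequence `u 0, …, u n`. -/
noncomputable def noStutter (u : ℕ → α) : ℕ → List α
  | 0 => [u 0]
  | n + 1 => noStutter u n ++ if u (n + 1) = u n then [] else [u (n + 1)]

/-- Prepends `c` to a no-stutter trace, merging it with a leading `c`: the effect of putting `c`
in front of the underlying sequence. -/
noncomputable def stutterCons (c : α) (w : List α) : List α :=
  if w.head? = some c then w else c :: w

theorem noStutter_prefix_succ (u : ℕ → α) (n : ℕ) : noStutter u n <+: noStutter u (n + 1) :=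
  List.prefix_append _ _

theorem noStutter_prefix {m : ℕ} (u : ℕ → α) (h : m ≤ n) : noStutter u m <+: noStutter u n :=
  Nat.le_induction List.prefix_rfl (fun n _ ih => ih.trans (noStutter_prefix_succ u n)) n h

theorem head?_noStutter (u : ℕ → α) (n : ℕ) : (noStutter u n).head? = some (u 0) :=
  List.singleton_prefix_iff_head?_eq_some.1 (noStutter_prefix u n.zero_le)

theorem noStutter_ne_nil (u : ℕ → α) (n : ℕ) : noStutter u n ≠ [] := fun h => by
  simpa [h] using head?_noStutter u n

theorem noStutter_congr (h : ∀ i ≤ n, u i = v i) : noStutter u n = noStutter v n := by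
  induction n with
  | zero => rw [noStutter, noStutter, h 0 le_rfl]
  | succ n ih =>
    rw [noStutter, noStutter, ih fun i hi => h i (by omega), h (n + 1) le_rfl, h n n.le_succ]

theorem noStutter_of_forall_eq (h : ∀ i < n, u i = u (i + 1)) : noStutter u n = [u 0] := by
  induction n with
  | zero => rfl
  | succ n ih =>
    rw [noStutter, ih fun i hi => h i (by omega), if_pos (h n n.lt_succ_self).symm,
      List.append_nil]

theorem stutterCons_append {w : List α} (hw : w ≠ []) (w' : List α) :
    stutterCons c (w ++ w') = stutterCons c w ++ w' := by
  unfold stutterCons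
  rw [List.head?_append_of_ne_nil _ hw]
  split_ifs <;> rfl

theorem stutterCons_noStutter (u : ℕ → α) (n : ℕ) :
    stutterCons (u 0) (noStutter u n) = noStutter u n :=
  if_pos (head?_noStutter u n)

theorem stutterCons_prefix {w w' : List α} (h : w <+: w') :
    stutterCons c w <+: stutterCons c w' := by
  obtain ⟨v, rfl⟩ := h
  rcases eq_or_ne w [] with rfl | hw
  · rcases v with _ | ⟨d, v⟩ <;> grind [stutterCons]
  · exact stutterCons_append hw v ▸ List.prefix_append _ _

theorem noStutter_succ' (u : ℕ → α) (n : ℕ) :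
    noStutter u (n + 1) = stutterCons (u 0) (noStutter (fun i => u (i + 1)) n) := by
  induction n with
  | zero => grind [noStutter, stutterCons]
  | succ n ih => rw [noStutter, ih, noStutter, stutterCons_append (noStutter_ne_nil _ n)]

end NoStutter

section TracePrefixes

variable {α : Type*} {u : ℕ → α} {k n : ℕ} {x : α} {len : ℕ∞}

/-- The finite prefixes of the no-stutter trace of the sequence `u 0, u 1, …` of length
`len + 1`. They determine a possibly infinite trace without a case split on `len`. -/
def tracePrefixes (len : ℕ∞) (u : ℕ → α) : Set (List α) :=
  {w | ∃ n : ℕ, (n : ℕ∞) ≤ len ∧ w <+: noStutter u n}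

theorem noStutter_mem_tracePrefixes (h : (n : ℕ∞) ≤ len) : noStutter u n ∈ tracePrefixes len u :=
  ⟨n, h, List.prefix_rfl⟩

theorem mem_tracePrefixes_of_prefix {w w' : List α} (h : w <+: w')
    (hw' : w' ∈ tracePrefixes len u) : w ∈ tracePrefixes len u :=
  let ⟨n, hn, hw'⟩ := hw'
  ⟨n, hn, h.trans hw'⟩

theorem eq_of_cons_mem_tracePrefixes {w : List α} (h : x :: w ∈ tracePrefixes len u) :
    x = u 0 := by
  obtain ⟨n, -, v, hv⟩ := h
  simpa [← hv] using head?_noStutter u n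

theorem stutterCons_of_mem_tracePrefixes {w : List α} (hw : w ∈ tracePrefixes len u)
    (hx : u 0 ≠ x) : stutterCons x w = x :: w := by
  refine if_neg fun hhead => ?_
  obtain ⟨v, rfl⟩ := List.head?_eq_some_iff.1 hhead
  exact hx (eq_of_cons_mem_tracePrefixes hw).symm

theorem stutterCons_mem_tracePrefixes {w : List α} (h : w ∈ tracePrefixes len u) :
    stutterCons (u 0) w ∈ tracePrefixes len u :=
  let ⟨n, hn, hw⟩ := h
  ⟨n, hn, stutterCons_noStutter u n ▸ stutterCons_prefix hw⟩

theorem mem_tracePrefixes_iff_stutterCons {v : ℕ → α} {j : ℕ} (hj : (j : ℕ∞) ≤ len)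
    (h : ∀ n, j ≤ n → stutterCons (u 0) (noStutter v n) = noStutter u (n + 1))
    (w : List α) : w ∈ tracePrefixes (len + 1) u ↔
      ∃ w' ∈ tracePrefixes len v, w <+: stutterCons (u 0) w' := by
  have hmax {n : ℕ} (hn : (n : ℕ∞) ≤ len) : ((max n j : ℕ) : ℕ∞) ≤ len := by
    exact mod_cast max_le hn hj
  constructor
  · rintro ⟨n, hn, hw⟩
    have hn : ((n - 1 : ℕ) : ℕ∞) ≤ len := tsub_le_iff_right.2 hn
    refine ⟨_, noStutter_mem_tracePrefixes (hmax hn), hw.trans ?_⟩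
    rw [h _ (le_max_right _ j)]
    exact noStutter_prefix u (by omega)
  · rintro ⟨w', ⟨n, hn, hw'⟩, hw⟩
    refine ⟨max n j + 1, ?_, ?_⟩
    · exact add_le_add_left (hmax hn) 1
    · rw [← h _ (le_max_right n j)]
      exact hw.trans (stutterCons_prefix (hw'.trans (noStutter_prefix v (le_max_left n j))))

theorem mem_tracePrefixes_iff_stutterCons_self (w : List α) :
    w ∈ tracePrefixes len u ↔ ∃ w' ∈ tracePrefixes len u, w <+: stutterCons (u 0) w' := by
  constructor
  · rintro ⟨n, hn, hw⟩
    exact ⟨_, noStutter_mem_tracePrefixes hn, (stutterCons_noStutter u n).symm ▸ hw⟩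
  · rintro ⟨w', ⟨n, hn, hw'⟩, hw⟩
    exact ⟨n, hn, stutterCons_noStutter u n ▸ hw.trans (stutterCons_prefix hw')⟩

theorem subseq_eq_some_iff {g : ℕ → Option α} {P : ℕ → Prop} :
    subseq g P k = some x ↔ ∃ i, P i ∧ Nat.count P i = k ∧ g i = some x := by
  have hcard (hP : {i | P i}.Finite) : {i | P i}.ncard = hP.toFinset.card :=
    Set.ncard_eq_toFinset_card _ hP
  have hk : {i | P i}.Infinite ∨ k < {i | P i}.ncard ↔
      ∀ hP : {i | P i}.Finite, k < hP.toFinset.card :=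
    ⟨fun h hP => hcard hP ▸ h.resolve_left (· hP),
      fun h => or_iff_not_imp_left.2 fun hP => hcard (not_not.1 hP) ▸ h (not_not.1 hP)⟩
  rw [subseq]
  constructor
  · intro h
    split_ifs at h with hlt
    exact ⟨_, Nat.nth_mem k (hk.1 hlt), Nat.count_nth (hk.1 hlt), h⟩
  · rintro ⟨i, hi, rfl, hx⟩
    rw [if_pos (hk.2 fun hP => Nat.count_lt_card hP hi), Nat.nth_count hi, hx]

/-- `i` starts a maximal block of equal values in `u`; these are the indices picked by
`nsTrace`. -/
def IsBlockStart (u : ℕ → α) (i : ℕ) : Prop :=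
  i = 0 ∨ u i ≠ u (i - 1)

theorem length_noStutter (u : ℕ → α) (n : ℕ) :
    (noStutter u n).length = Nat.count (IsBlockStart u) (n + 1) := by
  induction n with
  | zero => simp [noStutter, IsBlockStart, Nat.count_succ]
  | succ n ih =>
    rw [noStutter, List.length_append, ih, Nat.count_succ _ (n + 1)]
    by_cases h : u (n + 1) = u n <;> simp [IsBlockStart, h]

theorem getElem?_noStutter_eq_some_iff : (noStutter u n)[k]? = some x ↔
    ∃ i ≤ n, IsBlockStart u i ∧ Nat.count (IsBlockStart u) i = k ∧ u i = x := by
  induction n with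
  | zero => rcases k with _ | k <;> simp [noStutter, IsBlockStart]
  | succ n ih =>
    simp only [noStutter, Nat.le_succ_iff, or_and_right, exists_or, exists_eq_left, ← ih,
      ← length_noStutter]
    by_cases h : u (n + 1) = u n
    · simp [IsBlockStart, h]
    · grind [IsBlockStart]

theorem subseq_congr {g : ℕ → Option α} {P Q : ℕ → Prop}
    (h : ∀ i, (g i).isSome → ∀ m ≤ i, (P m ↔ Q m)) : subseq g P = subseq g Q := by
  ext k x
  rw [subseq_eq_some_iff, subseq_eq_some_iff]
  refine exists_congr fun i => ?_
  by_cases hi : g i = some x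
  · have hPQ := h i (Option.isSome_iff_exists.2 ⟨x, hi⟩)
    have hcount : Nat.count P i = Nat.count Q i := by
      simp only [Nat.count_eq_card_filter_range]
      exact congrArg _ <| Finset.filter_congr fun m hm => hPQ m (Finset.mem_range.1 hm).le
    rw [hPQ i le_rfl, hcount]
  · simp only [hi, and_false]

theorem nsTrace_eq_subseq_isBlockStart {g : ℕ → Option α}
    (hg : ∀ i, g i = if (i : ℕ∞) ≤ len then some (u i) else none) :
    nsTrace g = subseq g (IsBlockStart u) := by
  refine subseq_congr fun i hi m hmi => ?_
  have hi : (i : ℕ∞) ≤ len := by by_contra h; simp [hg, h] at hi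
  have hm : (m : ℕ∞) ≤ len := (Nat.cast_le.2 hmi).trans hi
  have hm' : ((m - 1 : ℕ) : ℕ∞) ≤ len := (Nat.cast_le.2 (m.sub_le 1)).trans hm
  simp only [hg, if_pos hm, if_pos hm', Option.isSome_some, true_and, ne_eq, Option.some_inj,
    IsBlockStart]

theorem nsTrace_eq_some_iff {g : ℕ → Option α}
    (hg : ∀ i, g i = if (i : ℕ∞) ≤ len then some (u i) else none) :
    nsTrace g k = some x ↔ ∃ w ∈ tracePrefixes len u, w[k]? = some x := by
  rw [nsTrace_eq_subseq_isBlockStart hg, subseq_eq_some_iff]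
  constructor
  · rintro ⟨i, hstart, hk, hx⟩
    have hi : (i : ℕ∞) ≤ len := by by_contra hi; simp [hg, hi] at hx
    have hx : u i = x := by simpa [hg, hi] using hx
    exact ⟨_, noStutter_mem_tracePrefixes hi,
      getElem?_noStutter_eq_some_iff.2 ⟨i, le_rfl, hstart, hk, hx⟩⟩
  · rintro ⟨w, ⟨n, hn, hw⟩, hx⟩
    obtain ⟨hk, rfl⟩ := List.getElem?_eq_some_iff.1 hx
    obtain ⟨i, hin, hstart, hcount, hi⟩ :=
      getElem?_noStutter_eq_some_iff.1 (List.prefix_iff_getElem?.1 hw k hk)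
    exact ⟨i, hstart, hcount, by rw [hg, if_pos ((Nat.cast_le.2 hin).trans hn), hi]⟩

theorem nsTrace_labelSeq_congr {S₁ S₂ A₁ A₂ l : Type*} {Tr₁ : S₁ → A₁ → S₁ → Prop}
    {Tr₂ : S₂ → A₂ → S₂ → Prop} {L₁ : S₁ → Set l} {L₂ : S₂ → Set l} {p : TPath Tr₁}
    {q : TPath Tr₂}
    (h : tracePrefixes p.len (fun i => L₁ (p.states i)) =
      tracePrefixes q.len fun i => L₂ (q.states i)) :
    nsTrace (p.labelSeq L₁) = nsTrace (q.labelSeq L₂) := by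
  ext k x
  exact (nsTrace_eq_some_iff fun _ => rfl).trans (h ▸ (nsTrace_eq_some_iff fun _ => rfl).symm)

end TracePrefixes

section SkipIndex

variable {α : Type*} {u : ℕ → α} {i j n : ℕ}

/-- The increasing enumeration of `ℕ \ {j}`, so that `u ∘ skipIndex j` is the sequence `u` without
its `j`-th entry. -/
def skipIndex (j i : ℕ) : ℕ :=
  if i < j then i else i + 1

theorem skipIndex_of_lt (h : i < j) : skipIndex j i = i := if_pos h

theorem skipIndex_of_le (h : j ≤ i) : skipIndex j i = i + 1 := if_neg h.not_gt

theorem noStutter_comp_skipIndex (hu : u j = u (j + 1)) (hn : j ≤ n) :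
    noStutter (u ∘ skipIndex j) n = noStutter u (n + 1) := by
  have hlast (n : ℕ) (hn : j ≤ n) : (u ∘ skipIndex j) n = u (n + 1) :=
    congrArg u (skipIndex_of_le hn)
  induction n, hn using Nat.le_induction with
  | base =>
    have hfirst : ∀ i ≤ j, (u ∘ skipIndex j) i = u i := fun i hi => by
      rcases hi.eq_or_lt with rfl | hi
      · exact (hlast i le_rfl).trans hu.symm
      · exact congrArg u (skipIndex_of_lt hi)
    rw [noStutter_congr hfirst, noStutter, if_pos hu.symm, List.append_nil]
  | succ n hn ih => rw [noStutter, ih, hlast n hn, hlast (n + 1) (by omega), ← noStutter]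

theorem stutterCons_noStutter_max (hu : ∀ i ≤ j, u i = u 0) (hn : j ≤ n) :
    stutterCons (u 0) (noStutter (fun i => u (max i j + 1)) n) = noStutter u (n + 1) := by
  induction n, hn using Nat.le_induction with
  | base =>
    rw [noStutter_of_forall_eq fun i hi => by rw [max_eq_right hi.le, max_eq_right hi],
      noStutter, noStutter_of_forall_eq fun i hi => by rw [hu i hi.le, hu (i + 1) hi], hu j le_rfl]
    by_cases h : u (j + 1) = u 0 <;> simp [stutterCons, h]
  | succ n hn ih =>
    rw [noStutter, stutterCons_append (noStutter_ne_nil _ n), ih, max_eq_left hn,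
      max_eq_left (by omega : j ≤ n + 1), ← noStutter]

end SkipIndex

section Runs

variable {S A l : Type*} {Tr : S → A → S → Prop} {L : S → Set l} {I : Set A} {r : S → Set A}
  {s : S} {a b : A} {α : ℕ → A} {σ σ' : ℕ → S} {j m n : ℕ}

theorem FinRun.mono (h : FinRun Tr n σ α) (hmn : m ≤ n) : FinRun Tr m σ α :=
  fun i hi => h i (hi.trans_le hmn)

theorem FinRun.label_eq (hI : InvisibleSet Tr L I) (h : FinRun Tr n σ α)
    (hα : ∀ i < n, α i ∈ I) {i : ℕ} (hi : i ≤ n) : L (σ i) = L (σ 0) := by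
  induction i with
  | zero => rfl
  | succ i ih => rw [← hI _ (hα i hi) _ _ (h i hi), ih (by omega)]

theorem FinRun.splice (h : FinRun Tr (n + 1) σ α) (h' : FinRun Tr j σ' α)
    (hj : σ' j = σ (j + 1)) :
    FinRun Tr n (fun i => if i < j then σ' i else σ (i + 1)) (α ∘ skipIndex j) := by
  intro i hi
  dsimp only [Function.comp_apply]
  rcases lt_trichotomy (i + 1) j with hij | rfl | hij
  · rw [if_pos (by omega), if_pos hij, skipIndex_of_lt (by omega)]
    exact h' i (by omega)
  · rw [if_pos (by omega), if_neg (by omega), skipIndex_of_lt (by omega), ← hj]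
    exact h' i (by omega)
  · rw [if_neg (by omega), if_neg (by omega), skipIndex_of_le (by omega)]
    exact h (i + 1) (by omega)

/-- This is where D1' is stronger than D1: it provides an `a`-transition between the two runs at
every index, so that they carry the same labels. -/
theorem CondD1'.exists_parallel_run (h : CondD1' Tr I r s) (hI : InvisibleSet Tr L I)
    (ha : a ∈ r s) (haI : a ∈ I) (hσ0 : σ 0 = s) (hσ : FinRun Tr n σ α)
    (hα : ∀ i < n, α i ∉ r s) {t : S} (ht : Tr (σ n) a t) :
    ∃ σ' : ℕ → S, Tr s a (σ' 0) ∧ FinRun Tr n σ' α ∧ σ' n = t ∧ ∀ i ≤ n, L (σ' i) = L (σ i) := by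
  obtain ⟨σ', hfirst, hrun, hlast, hmid⟩ := h a ha n σ α t hσ0 hσ hα ht
  refine ⟨σ', hfirst, hrun, hlast, fun i hi => ?_⟩
  suffices hi : Tr (σ i) a (σ' i) from (hI a haI _ _ hi).symm
  rcases hi.eq_or_lt with rfl | hin
  · exact hlast ▸ ht
  rcases i.eq_zero_or_pos with rfl | h0
  · exact hσ0 ▸ hfirst
  · exact hmid haI i h0 hin

theorem KeyAction.enabled (h : KeyAction Tr r s a) : ∃ t, Tr s a t :=
  h 0 (fun _ => s) (fun _ => a) rfl (fun _ hi => absurd hi (Nat.not_lt_zero _))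
    fun _ hi => absurd hi (Nat.not_lt_zero _)

theorem CondV.exists_invisible_keyAction (hV : CondV Tr I r s) (hD2w : CondD2w Tr r s)
    (hCI : CondI Tr I r s) {t : S} (h : Tr s a t) (ha : a ∉ r s) :
    ∃ b ∈ r s, b ∈ I ∧ KeyAction Tr r s b := by
  by_cases haI : a ∈ I
  · exact hCI ⟨a, haI, t, h⟩
  · obtain ⟨b, hb, hkey⟩ := hD2w ⟨a, t, h⟩
    exact ⟨b, hb, by_contra fun hbI => ha (hV ⟨b, hb, hbI, hkey.enabled⟩ a haI), hkey⟩

theorem CondD2.condD2w (hD2 : CondD2 Tr r s) (hD0 : CondD0 Tr r s) : CondD2w Tr r s := fun h =>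
  let ⟨a, ha, hen⟩ := hD0 h
  ⟨a, ha, hD2 a ha hen⟩

theorem CondL.wellFounded {s0 : S} (hL : CondL Tr I r s0) (hfin : {s | RedReach Tr r s0 s}.Finite)
    (hb : b ∉ I) : WellFounded fun t s => b ∉ r s ∧ ∃ a, RedTr Tr r s0 s a t := by
  rw [wellFounded_iff_isEmpty_descending_chain]
  refine ⟨fun ⟨f, hf⟩ => ?_⟩
  choose hbf α hα using hf
  obtain ⟨m, n, hmn, hfmn⟩ :=
    Set.Finite.exists_lt_map_eq_of_forall_mem (f := f) (fun n => (hα n).1) hfin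
  obtain ⟨i, -, hi⟩ := hL b hb (n - m) (fun i => f (m + i)) (fun i => α (m + i))
    (Nat.sub_pos_of_lt hmn) (fun i _ => hα (m + i)) (by simp [hfmn, Nat.add_sub_cancel' hmn.le])
  exact hbf _ hi

end Runs

theorem exists_mem_forall_of_antitone {α ι : Type*} [Preorder ι] [Nonempty ι]
    [IsDirectedOrder ι] {F : Set α} (hF : F.Finite) {Q : α → ι → Prop} (hQ : ∀ a, Antitone (Q a))
    (h : ∀ i, ∃ a ∈ F, Q a i) : ∃ a ∈ F, ∀ i, Q a i := by
  by_contra! hne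
  choose! f hf using hne
  obtain ⟨i, hi⟩ := (hF.image f).bddAbove
  obtain ⟨a, haF, ha⟩ := h i
  exact hf a haF (hQ a (hi (Set.mem_image_of_mem f haF)) ha)

section LabelledRuns

variable {S A l : Type*} {Tr : S → A → S → Prop} {L : S → Set l} {I : Set A} {r : S → Set A}
  {s : S} {b : A} {a : ℕ → A} {u : ℕ → Set l} {j n : ℕ}

/-- Some run of length `n` from `s` has the actions `a 0, …, a (n - 1)` and visits states
labelled `u 0, …, u n`. -/
def HasLabelledRun (Tr : S → A → S → Prop) (L : S → Set l) (a : ℕ → A) (u : ℕ → Set l) (s : S)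
    (n : ℕ) : Prop :=
  ∃ σ : ℕ → S, σ 0 = s ∧ FinRun Tr n σ a ∧ ∀ i ≤ n, L (σ i) = u i

theorem HasLabelledRun.antitone : Antitone (HasLabelledRun Tr L a u s) :=
  fun _ _ hmn ⟨σ, hσ0, hσ, hu⟩ => ⟨σ, hσ0, hσ.mono hmn, fun i hi => hu i (hi.trans hmn)⟩

theorem HasLabelledRun.label_zero (h : HasLabelledRun Tr L a u s n) : L s = u 0 := by
  obtain ⟨σ, rfl, -, hu⟩ := h
  exact hu 0 n.zero_le

theorem HasLabelledRun.exists_tr (h : HasLabelledRun Tr L a u s (n + 1)) : ∃ t, Tr s (a 0) t := by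
  obtain ⟨σ, rfl, hσ, -⟩ := h
  exact ⟨σ 1, hσ 0 n.succ_pos⟩

theorem HasLabelledRun.label_succ (h : HasLabelledRun Tr L a u s (n + 1))
    (hI : InvisibleSet Tr L I) (ha : a n ∈ I) : u n = u (n + 1) := by
  obtain ⟨σ, -, hσ, hu⟩ := h
  rw [← hu n n.le_succ, ← hu (n + 1) le_rfl]
  exact hI _ ha _ _ (hσ n n.lt_succ_self)

theorem HasLabelledRun.label_eq (h : HasLabelledRun Tr L a u s n) (hI : InvisibleSet Tr L I)
    (ha : ∀ i < n, a i ∈ I) {i : ℕ} (hi : i ≤ n) : u i = u 0 := by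
  obtain ⟨σ, -, hσ, hu⟩ := h
  rw [← hu i hi, ← hu 0 n.zero_le, hσ.label_eq hI ha hi]

theorem HasLabelledRun.insert (h : HasLabelledRun Tr L a u s n) (hI : InvisibleSet Tr L I)
    (hD1 : CondD1' Tr I r s) (ha : ∀ i < n, a i ∉ r s) (hb : b ∈ r s) (hbI : b ∈ I)
    (hkey : KeyAction Tr r s b) : ∃ t, Tr s b t ∧ HasLabelledRun Tr L a u t n := by
  obtain ⟨σ, hσ0, hσ, hu⟩ := h
  obtain ⟨t, ht⟩ := hkey n σ a hσ0 hσ ha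
  obtain ⟨σ', hfirst, hσ', -, hL⟩ := hD1.exists_parallel_run hI hb hbI hσ0 hσ ha ht
  exact ⟨σ' 0, hfirst, σ', rfl, hσ', fun i hi => (hL i hi).trans (hu i hi)⟩

theorem FinRun.hasLabelledRun_splice {σ σ' : ℕ → S} (h : FinRun Tr (n + 1) σ a)
    (h' : FinRun Tr j σ' a) (hj : σ' j = σ (j + 1)) (hlt : ∀ i < j, L (σ' i) = u i)
    (hge : ∀ i ≤ n, j ≤ i → L (σ (i + 1)) = u i) :
    HasLabelledRun Tr L (a ∘ skipIndex j) u (σ' 0) n := by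
  refine ⟨_, ?_, h.splice h' hj, fun i hi => ?_⟩
  · rcases j.eq_zero_or_pos with rfl | hj0
    · exact hj.symm
    · exact if_pos hj0
  · split_ifs with hij
    · exact hlt i hij
    · exact hge i hi (not_lt.1 hij)

theorem HasLabelledRun.pull_invisible (h : HasLabelledRun Tr L a u s (n + 1)) (hj : j ≤ n)
    (hI : InvisibleSet Tr L I) (hD1 : CondD1' Tr I r s) (ha : ∀ i < j, a i ∉ r s)
    (haj : a j ∈ r s) (hajI : a j ∈ I) :
    ∃ t, Tr s (a j) t ∧ HasLabelledRun Tr L (a ∘ skipIndex j) (u ∘ skipIndex j) t n := by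
  obtain ⟨σ, hσ0, hσ, hu⟩ := h
  obtain ⟨σ', hfirst, hσ', hlast, hL⟩ := hD1.exists_parallel_run hI haj hajI hσ0
    (hσ.mono (by omega)) ha (hσ j (by omega))
  refine ⟨_, hfirst, hσ.hasLabelledRun_splice hσ' hlast (fun i hij => ?_) fun i hi hij => ?_⟩
  · rw [Function.comp_apply, skipIndex_of_lt hij, hL i hij.le, hu i (by omega)]
  · rw [Function.comp_apply, skipIndex_of_le hij, hu (i + 1) (by omega)]

theorem HasLabelledRun.forall_invisible (h : HasLabelledRun Tr L a u s (j + 1))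
    (hD1 : CondD1' Tr I r s) (hV : CondV Tr I r s) (ha : ∀ i < j, a i ∉ r s) (haj : a j ∈ r s)
    (hajI : a j ∉ I) : ∀ i < j, a i ∈ I := by
  obtain ⟨σ, hσ0, hσ, -⟩ := h
  obtain ⟨σ', hfirst, -⟩ := hD1 (a j) haj j σ a (σ (j + 1)) hσ0 (hσ.mono j.le_succ) ha
    (hσ j j.lt_succ_self)
  exact fun i hi => by_contra fun haI => ha i hi (hV ⟨a j, haj, hajI, _, hfirst⟩ _ haI)

theorem HasLabelledRun.pull_of_forall_invisible (h : HasLabelledRun Tr L a u s (n + 1))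
    (hj : j ≤ n) (hI : InvisibleSet Tr L I) (hD1 : CondD1' Tr I r s) (ha : ∀ i < j, a i ∉ r s)
    (haj : a j ∈ r s) (haI : ∀ i < j, a i ∈ I) :
    ∃ t, Tr s (a j) t ∧ HasLabelledRun Tr L (a ∘ skipIndex j) (fun i => u (max i j + 1)) t n := by
  obtain ⟨σ, hσ0, hσ, hu⟩ := h
  obtain ⟨σ', hfirst, hσ', hlast, -⟩ := hD1 (a j) haj j σ a (σ (j + 1)) hσ0
    (hσ.mono (by omega)) ha (hσ j (by omega))
  refine ⟨_, hfirst, hσ.hasLabelledRun_splice hσ' hlast (fun i hij => ?_) fun i hi hij => ?_⟩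
  · rw [max_eq_right hij.le, hσ'.label_eq hI haI hij.le, ← hσ'.label_eq hI haI le_rfl, hlast,
      hu (j + 1) (by omega)]
  · rw [max_eq_left hij, hu (i + 1) (by omega)]

end LabelledRuns

/-- A state together with a behaviour that remains to be simulated from it: `len` transitions
with the actions `acts 0, acts 1, …` between states labelled `labels 0, labels 1, …`. -/
structure SimConfig (S A l : Type*) where
  state : S
  len : ℕ∞
  acts : ℕ → A
  labels : ℕ → Set l

namespace SimConfig

variable {S A l : Type*} {Tr : S → A → S → Prop} {s0 : S} {L : S → Set l} {I : Set A}
  {r : S → Set A} {c c' : SimConfig S A l}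

/-- The state of `c` belongs to the reduced system and the behaviour of `c` can be performed from
it in the full one. Only the finite prefixes of an infinite behaviour are required to have runs,
because under infinite branching these need not extend to a single infinite run. -/
def Valid (Tr : S → A → S → Prop) (s0 : S) (L : S → Set l) (r : S → Set A)
    (c : SimConfig S A l) : Prop :=
  RedReach Tr r s0 c.state ∧
    ∀ n : ℕ, (n : ℕ∞) ≤ c.len → HasLabelledRun Tr L c.acts c.labels c.state n

/-- The finite prefixes of the no-stutter trace of the behaviour of `c`. -/
def traces (c : SimConfig S A l) : Set (List (Set l)) :=
  tracePrefixes c.len c.labels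

/-- One transition of the reduced system simulating the behaviour of a configuration. If no
action of the behaviour is in the stubborn set, an invisible action is inserted in front of it.
Otherwise the first such action, `a j`, is moved to the front and executed; the labels before it
remain if it is invisible, and are all replaced by the label behind it if it is visible. -/
inductive Step (Tr : S → A → S → Prop) (s0 : S) (I : Set A) (r : S → Set A) :
    SimConfig S A l → SimConfig S A l → Prop
  | insert {s t b M a u} (hst : RedTr Tr r s0 s b t) (ha : ∀ i : ℕ, (i : ℕ∞) < M → a i ∉ r s) :
      Step Tr s0 I r ⟨s, M, a, u⟩ ⟨t, M, a, u⟩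
  | pullInvisible {s t M a u} {j : ℕ} (hj : (j : ℕ∞) ≤ M) (hst : RedTr Tr r s0 s (a j) t)
      (ha : ∀ i < j, a i ∉ r s) (hu : u j = u (j + 1)) :
      Step Tr s0 I r ⟨s, M + 1, a, u⟩ ⟨t, M, a ∘ skipIndex j, u ∘ skipIndex j⟩
  | pullVisible {s t M a u} {j : ℕ} (hj : (j : ℕ∞) ≤ M) (hst : RedTr Tr r s0 s (a j) t)
      (hu : ∀ i ≤ j, u i = u 0) :
      Step Tr s0 I r ⟨s, M + 1, a, u⟩ ⟨t, M, a ∘ skipIndex j, fun i => u (max i j + 1)⟩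

theorem exists_valid_of_forall (hfin : {s | RedReach Tr r s0 s}.Finite) {s : S} {b : A}
    {M : ℕ∞} {a : ℕ → A} {u : ℕ → Set l} (hs : RedReach Tr r s0 s) (hb : b ∈ r s)
    (h : ∀ n : ℕ, (n : ℕ∞) ≤ M → ∃ t, Tr s b t ∧ HasLabelledRun Tr L a u t n) :
    ∃ t, RedTr Tr r s0 s b t ∧ Valid Tr s0 L r ⟨t, M, a, u⟩ := by
  have : Nonempty {n : ℕ // (n : ℕ∞) ≤ M} := ⟨0, by simp⟩
  obtain ⟨t, ht, hrun⟩ := exists_mem_forall_of_antitone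
    (F := {t | RedReach Tr r s0 t ∧ Tr s b t}) (hfin.subset fun t ht => ht.1)
    (Q := fun t (n : {n : ℕ // (n : ℕ∞) ≤ M}) => HasLabelledRun Tr L a u t n)
    (fun t m n hmn => HasLabelledRun.antitone hmn)
    fun n => let ⟨t, ht, hrun⟩ := h n n.2; ⟨t, ⟨hs.step hb ht, ht⟩, hrun⟩
  exact ⟨t, ⟨hs, hb, ht.2⟩, ht.1, fun n hn => hrun ⟨n, hn⟩⟩

theorem Valid.exists_step_of_forall_notMem (hc : Valid Tr s0 L r c) (hlen : 0 < c.len)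
    (ha : ∀ i : ℕ, (i : ℕ∞) < c.len → c.acts i ∉ r c.state) (hI : InvisibleSet Tr L I)
    (hD1 : CondD1' Tr I r c.state) (hD2w : CondD2w Tr r c.state) (hV : CondV Tr I r c.state)
    (hCI : CondI Tr I r c.state) (hfin : {s | RedReach Tr r s0 s}.Finite) :
    ∃ c', Step Tr s0 I r c c' ∧ Valid Tr s0 L r c' := by
  obtain ⟨hs, hrun⟩ := hc
  obtain ⟨_, hen⟩ := (hrun 1 (Order.one_le_iff_pos.2 hlen)).exists_tr
  obtain ⟨b, hb, hbI, hkey⟩ := hV.exists_invisible_keyAction hD2w hCI hen (ha 0 hlen)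
  obtain ⟨t, hst, ht⟩ := exists_valid_of_forall hfin hs hb fun n hn =>
    (hrun n hn).insert hI hD1 (fun i hi => ha i ((Nat.cast_lt.2 hi).trans_le hn)) hb hbI hkey
  exact ⟨_, Step.insert hst ha, ht⟩

theorem Valid.exists_step_of_mem (hc : Valid Tr s0 L r c) {j : ℕ} (hj : (j : ℕ∞) < c.len)
    (haj : c.acts j ∈ r c.state) (ha : ∀ i < j, c.acts i ∉ r c.state)
    (hI : InvisibleSet Tr L I) (hD1 : CondD1' Tr I r c.state) (hV : CondV Tr I r c.state)
    (hfin : {s | RedReach Tr r s0 s}.Finite) :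
    ∃ c', Step Tr s0 I r c c' ∧ Valid Tr s0 L r c' := by
  obtain ⟨s, len, a, u⟩ := c
  obtain ⟨hs, hrun⟩ := hc
  dsimp only at *
  obtain ⟨M, rfl⟩ : ∃ M, len = M + 1 :=
    ⟨_, (tsub_add_cancel_of_le (Order.one_le_iff_pos.2 (pos_of_gt hj))).symm⟩
  have hjM : (j : ℕ∞) ≤ M := ENat.natCast_lt_add_one_iff.1 hj
  have hrun_max (n : ℕ) (hn : (n : ℕ∞) ≤ M) : HasLabelledRun Tr L a u s (max n j + 1) :=
    hrun _ (by push_cast; gcongr; exact max_le hn hjM)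
  have hrun_j : HasLabelledRun Tr L a u s (j + 1) := by simpa using hrun_max 0 (by simp)
  by_cases hajI : a j ∈ I
  · obtain ⟨t, hst, ht⟩ := exists_valid_of_forall hfin hs haj fun n hn =>
      let ⟨t, hst, ht⟩ :=
        (hrun_max n hn).pull_invisible (le_max_right n j) hI hD1 ha haj hajI
      ⟨t, hst, ht.antitone (le_max_left n j)⟩
    exact ⟨_, Step.pullInvisible hjM hst ha (hrun_j.label_succ hI hajI), ht⟩
  · have haI := hrun_j.forall_invisible hD1 hV ha haj hajI
    obtain ⟨t, hst, ht⟩ := exists_valid_of_forall hfin hs haj fun n hn =>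
      let ⟨t, hst, ht⟩ :=
        (hrun_max n hn).pull_of_forall_invisible (le_max_right n j) hI hD1 ha haj haI
      ⟨t, hst, ht.antitone (le_max_left n j)⟩
    have hu : ∀ i ≤ j, u i = u 0 := fun i hi =>
      (hrun_j.antitone j.le_succ).label_eq hI haI hi
    exact ⟨_, Step.pullVisible hjM hst hu, ht⟩

theorem Valid.exists_step (hc : Valid Tr s0 L r c) (hlen : 0 < c.len) (hI : InvisibleSet Tr L I)
    (hr : ∀ s, RedReach Tr r s0 s →
      CondD1' Tr I r s ∧ CondD2w Tr r s ∧ CondV Tr I r s ∧ CondI Tr I r s)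
    (hfin : {s | RedReach Tr r s0 s}.Finite) :
    ∃ c', Step Tr s0 I r c c' ∧ Valid Tr s0 L r c' := by
  obtain ⟨hD1, hD2w, hV, hCI⟩ := hr c.state hc.1
  by_cases h : ∃ j : ℕ, (j : ℕ∞) < c.len ∧ c.acts j ∈ r c.state
  · obtain ⟨hj, haj⟩ := Nat.find_spec h
    exact hc.exists_step_of_mem hj haj (fun i hi haj => Nat.find_min h hi
      ⟨(Nat.cast_lt.2 hi).trans hj, haj⟩) hI hD1 hV hfin
  · push Not at h
    exact hc.exists_step_of_forall_notMem hlen h hI hD1 hD2w hV hCI hfin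

theorem Step.exists_redTr (h : Step Tr s0 I r c c') : ∃ b, RedTr Tr r s0 c.state b c'.state := by
  cases h with
  | insert hst | pullInvisible _ hst | pullVisible _ hst => exact ⟨_, hst⟩

theorem Step.mem_traces_iff (h : Step Tr s0 I r c c') (w : List (Set l)) :
    w ∈ c.traces ↔ ∃ w' ∈ c'.traces, w <+: stutterCons (c.labels 0) w' := by
  cases h with
  | insert hst ha => exact mem_tracePrefixes_iff_stutterCons_self w
  | pullInvisible hj hst ha hu =>
    refine mem_tracePrefixes_iff_stutterCons hj (fun n hn => ?_) w
    rw [noStutter_comp_skipIndex hu hn, stutterCons_noStutter]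
  | pullVisible hj hst hu =>
    exact mem_tracePrefixes_iff_stutterCons hj (fun n hn => stutterCons_noStutter_max hu hn) w

theorem Step.len_eq_top_iff (h : Step Tr s0 I r c c') : c'.len = ⊤ ↔ c.len = ⊤ := by
  cases h <;> simp

/-- The `v`-th action of the behaviour of `c` is visible and changes the label. -/
def VisibleChange (I : Set A) (c : SimConfig S A l) (v : ℕ) : Prop :=
  (v : ℕ∞) < c.len ∧ c.acts v ∉ I ∧ c.labels v ≠ c.labels (v + 1)

theorem VisibleChange.pull {s t : S} {M : ℕ∞} {a : ℕ → A} {u u' : ℕ → Set l} {j v : ℕ}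
    (hv : VisibleChange I ⟨s, M + 1, a, u⟩ (v + 1)) (hj : j ≤ v)
    (hu' : ∀ i, j ≤ i → u' i = u (i + 1)) : VisibleChange I ⟨t, M, a ∘ skipIndex j, u'⟩ v := by
  obtain ⟨hlen, hvI, hne⟩ := hv
  refine ⟨lt_of_add_lt_add_right (a := 1) hlen, ?_, ?_⟩
  · simpa only [Function.comp_apply, skipIndex_of_le hj]
  · simpa only [hu' v hj, hu' (v + 1) (by omega)]

theorem Step.visibleChange (h : Step Tr s0 I r c c') {v : ℕ} (hv : VisibleChange I c v)
    (hlabel : c'.labels 0 = c.labels 0) :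
    (∃ v' < v, VisibleChange I c' v') ∨
      VisibleChange I c' v ∧ c'.acts v = c.acts v ∧ c.acts v ∉ r c.state := by
  have ⟨hlen, hvI, hne⟩ := hv
  cases h with
  | insert hst ha => exact Or.inr ⟨hv, rfl, ha v hlen⟩
  | @pullInvisible _ _ _ a u j hj hst ha hu =>
    dsimp only at *
    rcases lt_trichotomy v j with hvj | rfl | hvj
    · have hacts : (a ∘ skipIndex j) v = a v := congrArg a (skipIndex_of_lt hvj)
      have hlabel_v : (u ∘ skipIndex j) v = u v := congrArg u (skipIndex_of_lt hvj)
      have hlabel_succ : (u ∘ skipIndex j) (v + 1) = u (v + 1) := by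
        rcases (Nat.succ_le_of_lt hvj).eq_or_lt with rfl | hvj'
        · rw [Function.comp_apply, skipIndex_of_le le_rfl, ← hu]
        · rw [Function.comp_apply, skipIndex_of_lt hvj']
      exact Or.inr ⟨⟨(Nat.cast_lt.2 hvj).trans_le hj, by simpa only [hacts] using hvI,
        fun h => hne (hlabel_v.symm.trans (h.trans hlabel_succ))⟩, hacts, ha v hvj⟩
    · exact absurd hu hne
    · obtain ⟨v, rfl⟩ := Nat.exists_eq_succ_of_ne_zero (Nat.ne_zero_of_lt hvj)
      exact Or.inl ⟨v, v.lt_succ_self, hv.pull (Nat.lt_succ_iff.1 hvj) fun i hi =>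
        congrArg u (skipIndex_of_le hi)⟩
  | @pullVisible _ _ _ a u j hj hst hu =>
    dsimp only at *
    rcases lt_or_ge j v with hvj | hvj
    · obtain ⟨v, rfl⟩ := Nat.exists_eq_succ_of_ne_zero (Nat.ne_zero_of_lt hvj)
      exact Or.inl ⟨v, v.lt_succ_self, hv.pull (Nat.lt_succ_iff.1 hvj) fun i hi => by
        rw [max_eq_left hi]⟩
    · have hvu : u (v + 1) = u 0 := by
        rcases hvj.eq_or_lt with rfl | hvj
        · simpa only [zero_max] using hlabel
        · exact hu _ hvj
      exact absurd ((hu v hvj).trans hvu.symm) hne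

/-- A simulation step that does not change the label although the remaining behaviour still
does. -/
def DelayStep (Tr : S → A → S → Prop) (s0 : S) (I : Set A) (r : S → Set A)
    (c c' : SimConfig S A l) : Prop :=
  Step Tr s0 I r c c' ∧ c'.labels 0 = c.labels 0 ∧ ∃ v, VisibleChange I c v

theorem acc_of_visibleChange (hL : CondL Tr I r s0)
    (hfin : {s | RedReach Tr r s0 s}.Finite) {v : ℕ} (hv : VisibleChange I c v) :
    Acc (fun c' c => DelayStep Tr s0 I r c c') c := by
  induction v using Nat.strong_induction_on generalizing c with
  | _ v ihv =>
  obtain ⟨b, hb⟩ : ∃ b, c.acts v = b := ⟨_, rfl⟩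
  have hwf := hL.wellFounded hfin (hb ▸ hv.2.1 : b ∉ I)
  obtain ⟨s, hs⟩ : ∃ s, c.state = s := ⟨_, rfl⟩
  induction s using hwf.induction generalizing c with
  | _ s ihs =>
  subst hb hs
  refine Acc.intro c fun c' ⟨hstep, hlabel, _⟩ => ?_
  rcases hstep.visibleChange hv hlabel with ⟨v', hlt, hv'⟩ | ⟨hv', hacts, hmem⟩
  · exact ihv v' hlt hv'
  · exact ihs c'.state ⟨hmem, hstep.exists_redTr⟩ hv' hacts rfl

theorem wellFounded_delayStep (hL : CondL Tr I r s0) (hfin : {s | RedReach Tr r s0 s}.Finite) :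
    WellFounded fun c' c : SimConfig S A l => DelayStep Tr s0 I r c c' :=
  ⟨fun c => Acc.intro c fun _ h => h.2.2.elim fun _ hv => (acc_of_visibleChange hL hfin hv).inv h⟩

theorem Valid.label_zero (hc : Valid Tr s0 L r c) : L c.state = c.labels 0 :=
  (hc.2 0 (by simp)).label_zero

theorem Valid.mem_traces_of_forall_not_visibleChange (hc : Valid Tr s0 L r c)
    (hI : InvisibleSet Tr L I) (h : ∀ v, ¬ VisibleChange I c v) {w : List (Set l)}
    (hw : w ∈ c.traces) : w <+: [c.labels 0] := by
  obtain ⟨n, hn, hw⟩ := hw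
  rwa [noStutter_of_forall_eq fun i hi => ?_] at hw
  have hi' : ((i + 1 : ℕ) : ℕ∞) ≤ c.len := (Nat.cast_le.2 hi).trans hn
  by_contra hne
  refine h i ⟨(Nat.cast_lt.2 hi).trans_le hn, fun hiI => hne ?_, hne⟩
  exact (hc.2 (i + 1) hi').label_succ hI hiI

theorem Step.mem_traces_of_label_eq (h : Step Tr s0 I r c c') (hlabel : c'.labels 0 = c.labels 0)
    {w : List (Set l)} (hw : w ∈ c.traces) : w ∈ c'.traces := by
  obtain ⟨w', hw', hww'⟩ := (h.mem_traces_iff w).1 hw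
  exact mem_tracePrefixes_of_prefix (hlabel ▸ hww') (stutterCons_mem_tracePrefixes hw')

theorem Step.mem_traces_of_label_ne (h : Step Tr s0 I r c c') (hlabel : c'.labels 0 ≠ c.labels 0)
    {y : Set l} {w : List (Set l)} (hw : y :: w ∈ c.traces) : w ∈ c'.traces := by
  obtain ⟨w', hw', hww'⟩ := (h.mem_traces_iff _).1 hw
  rw [stutterCons_of_mem_tracePrefixes hw' hlabel] at hww'
  exact mem_tracePrefixes_of_prefix (List.cons_prefix_cons.1 hww').2 hw'

/-- A sequence of configurations whose states form a path of the reduced system simulating the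
behaviour of the first one; it may be extended arbitrarily once nothing is left to simulate. -/
structure Simulation (Tr : S → A → S → Prop) (s0 : S) (L : S → Set l) (I : Set A) (r : S → Set A)
    (x : ℕ → SimConfig S A l) : Prop where
  valid : ∀ i, Valid Tr s0 L r (x i)
  step : ∀ i, 0 < (x i).len → Step Tr s0 I r (x i) (x (i + 1))

theorem Valid.exists_simulation (hc : Valid Tr s0 L r c) (hI : InvisibleSet Tr L I)
    (hr : ∀ s, RedReach Tr r s0 s →
      CondD1' Tr I r s ∧ CondD2w Tr r s ∧ CondV Tr I r s ∧ CondI Tr I r s)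
    (hfin : {s | RedReach Tr r s0 s}.Finite) :
    ∃ x : ℕ → SimConfig S A l, x 0 = c ∧ Simulation Tr s0 L I r x := by
  have hnext (c : {c : SimConfig S A l // Valid Tr s0 L r c}) :
      ∃ c' : {c : SimConfig S A l // Valid Tr s0 L r c},
        0 < c.1.len → Step Tr s0 I r c.1 c'.1 := by
    by_cases hlen : 0 < c.1.len
    · obtain ⟨c', hstep, hc'⟩ := c.2.exists_step hlen hI hr hfin
      exact ⟨⟨c', hc'⟩, fun _ => hstep⟩
    · exact ⟨c, fun h => absurd h hlen⟩
  choose next hnext using hnext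
  refine ⟨fun i => (next^[i] ⟨c, hc⟩).1, rfl, fun i => (next^[i] ⟨c, hc⟩).2, fun i hlen => ?_⟩
  rw [Function.iterate_succ_apply']
  exact hnext _ hlen

/-- `w` is a prefix of the no-stutter trace of the path that visits the states of `x` until
nothing is left to simulate. -/
def IsSimulatedPrefix (x : ℕ → SimConfig S A l) (w : List (Set l)) : Prop :=
  ∃ m, (∀ i < m, 0 < (x i).len) ∧ w <+: noStutter (fun i => (x i).labels 0) m

variable {x : ℕ → SimConfig S A l}

theorem IsSimulatedPrefix.of_tail {w w' : List (Set l)}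
    (h : IsSimulatedPrefix (fun i => x (i + 1)) w) (hpos : 0 < (x 0).len)
    (hw' : w' <+: stutterCons ((x 0).labels 0) w) : IsSimulatedPrefix x w' := by
  obtain ⟨m, hm, hw⟩ := h
  refine ⟨m + 1, fun i hi => ?_, ?_⟩
  · rcases i with _ | i
    · exact hpos
    · exact hm i (by omega)
  · rw [noStutter_succ']
    exact hw'.trans (stutterCons_prefix hw)

namespace Simulation

theorem tail (hx : Simulation Tr s0 L I r x) : Simulation Tr s0 L I r fun i => x (i + 1) :=
  ⟨fun i => hx.valid (i + 1), fun i => hx.step (i + 1)⟩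

theorem mem_traces_of_isSimulatedPrefix (hx : Simulation Tr s0 L I r x) {w : List (Set l)}
    (hw : IsSimulatedPrefix x w) : w ∈ (x 0).traces := by
  obtain ⟨m, hm, hw⟩ := hw
  suffices h : noStutter (fun i => (x i).labels 0) m ∈ (x 0).traces from
    mem_tracePrefixes_of_prefix hw h
  clear hw
  induction m generalizing x with
  | zero => exact noStutter_mem_tracePrefixes (n := 0) (by simp)
  | succ m ih =>
    rw [noStutter_succ', (hx.step 0 (hm 0 m.succ_pos)).mem_traces_iff]
    exact ⟨_, ih hx.tail fun i hi => hm (i + 1) (by omega), List.prefix_rfl⟩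

theorem isSimulatedPrefix_of_mem_traces (hx : Simulation Tr s0 L I r x) (hI : InvisibleSet Tr L I)
    (hL : CondL Tr I r s0) (hfin : {s | RedReach Tr r s0 s}.Finite) {w : List (Set l)}
    (hw : w ∈ (x 0).traces) : IsSimulatedPrefix x w := by
  induction w generalizing x with
  | nil => exact ⟨0, by simp, List.nil_prefix⟩
  | cons y w ihw =>
  obtain ⟨c, hc⟩ : ∃ c, x 0 = c := ⟨_, rfl⟩
  induction c using (wellFounded_delayStep hL hfin).induction generalizing x with
  | _ c ihc =>
  subst hc
  obtain rfl : y = (x 0).labels 0 := eq_of_cons_mem_tracePrefixes hw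
  by_cases hv : ∃ v, VisibleChange I (x 0) v
  · have ⟨v, hlen, _⟩ := hv
    have hpos : 0 < (x 0).len := pos_of_gt hlen
    have hstep := hx.step 0 hpos
    by_cases hlabel : (x 1).labels 0 = (x 0).labels 0
    · have hw' := hstep.mem_traces_of_label_eq hlabel hw
      exact (ihc (x 1) ⟨hstep, hlabel, hv⟩ hx.tail hw' rfl).of_tail hpos (by simp [stutterCons])
    · have hw' := hstep.mem_traces_of_label_ne hlabel hw
      have hcons := stutterCons_of_mem_tracePrefixes hw' hlabel
      exact (ihw hx.tail hw').of_tail hpos (hcons ▸ List.prefix_rfl)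
  · push Not at hv
    exact ⟨0, by simp, (hx.valid 0).mem_traces_of_forall_not_visibleChange hI hv hw⟩

theorem len_eq_top (hx : Simulation Tr s0 L I r x) (h : (x 0).len = ⊤) (i : ℕ) :
    (x i).len = ⊤ := by
  induction i with
  | zero => exact h
  | succ i ih => exact (hx.step i (by simp [ih])).len_eq_top_iff.2 ih

theorem exists_len (hx : Simulation Tr s0 L I r x) (hI : InvisibleSet Tr L I)
    (hL : CondL Tr I r s0) (hfin : {s | RedReach Tr r s0 s}.Finite) :
    ∃ M : ℕ∞, (M = ⊤ ↔ (x 0).len = ⊤) ∧ (∀ i : ℕ, (i : ℕ∞) < M → 0 < (x i).len) ∧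
      tracePrefixes M (fun i => (x i).labels 0) = (x 0).traces := by
  suffices ∃ M : ℕ∞, (M = ⊤ ↔ (x 0).len = ⊤) ∧ (∀ i : ℕ, (i : ℕ∞) < M → 0 < (x i).len) ∧
      (x 0).traces ⊆ tracePrefixes M fun i => (x i).labels 0 by
    obtain ⟨M, htop, hM, hsub⟩ := this
    refine ⟨M, htop, hM, Set.Subset.antisymm (fun w ⟨m, hm, hw⟩ => ?_) hsub⟩
    exact hx.mem_traces_of_isSimulatedPrefix
      ⟨m, fun i hi => hM i ((Nat.cast_lt.2 hi).trans_le hm), hw⟩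
  by_cases hlen : (x 0).len = ⊤
  · refine ⟨⊤, by simp [hlen], fun i _ => by simp [hx.len_eq_top hlen i], fun w hw => ?_⟩
    obtain ⟨m, -, hw⟩ := hx.isSimulatedPrefix_of_mem_traces hI hL hfin hw
    exact ⟨m, le_top, hw⟩
  · obtain ⟨n, hn⟩ := ENat.ne_top_iff_exists.1 hlen
    obtain ⟨m, hm, hprefix⟩ := hx.isSimulatedPrefix_of_mem_traces hI hL hfin
      (noStutter_mem_tracePrefixes hn.le)
    refine ⟨m, by simp [hlen], fun i hi => hm i (Nat.cast_lt.1 hi), fun w ⟨k, hk, hw⟩ => ?_⟩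
    have hkn : k ≤ n := Nat.cast_le.1 (hn ▸ hk)
    exact ⟨m, le_rfl, hw.trans ((noStutter_prefix _ hkn).trans hprefix)⟩

end Simulation

end SimConfig

section Main

variable {S A l : Type*} {Tr : S → A → S → Prop} {s0 : S} {L : S → Set l} {I : Set A}
  {r : S → Set A}

open SimConfig in
theorem exists_stutterEquiv_redTr_path (hI : InvisibleSet Tr L I)
    (hr : ∀ s, RedReach Tr r s0 s →
      CondD1' Tr I r s ∧ CondD2w Tr r s ∧ CondV Tr I r s ∧ CondI Tr I r s)
    (hL : CondL Tr I r s0) (hfin : {s | RedReach Tr r s0 s}.Finite)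
    (q : TPath Tr) (hq : q.states 0 = s0) :
    ∃ p : TPath (RedTr Tr r s0), p.states 0 = s0 ∧ StutterEquiv L L p q := by
  have hc : Valid Tr s0 L r ⟨s0, q.len, q.acts, fun i => L (q.states i)⟩ :=
    ⟨RedReach.refl, fun n hn => ⟨q.states, hq,
      fun i hi => q.valid i ((Nat.cast_lt.2 hi).trans_le hn), fun _ _ => rfl⟩⟩
  obtain ⟨x, hx0, hx⟩ := hc.exists_simulation hI hr hfin
  obtain ⟨M, htop, hM, htraces⟩ := hx.exists_len hI hL hfin
  have hredTr (i : ℕ) (hi : 0 < (x i).len) := (hx.step i hi).exists_redTr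
  have : Nonempty A := ⟨q.acts 0⟩
  choose! b hb using hredTr
  refine ⟨⟨fun i => (x i).state, b, M, fun i hi => hb i (hM i hi)⟩, congrArg state hx0, ?_, ?_⟩
  · rw [htop, hx0]
  · refine nsTrace_labelSeq_congr ?_
    simp only [(hx.valid _).label_zero, htraces, hx0, traces]

theorem stubborn_sets_with_D1'_preserve_stutter_trace_equivalence_general
    (hI : InvisibleSet Tr L I)
    (hr : ∀ s, RedReach Tr r s0 s →
      CondD1' Tr I r s ∧ CondD2w Tr r s ∧ CondV Tr I r s ∧ CondI Tr I r s)
    (hL : CondL Tr I r s0) (hfin : {s | RedReach Tr r s0 s}.Finite) :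
    StutterTraceEquiv (RedTr Tr r s0) s0 L Tr s0 L :=
  ⟨fun p hp => ⟨⟨p.states, p.acts, p.len, fun i hi => (p.valid i hi).2.2⟩, hp, Iff.rfl, rfl⟩,
    exists_stutterEquiv_redTr_path hI hr hL hfin⟩

end Main

/-- Given an LSTS `TS` and a weak or strong stubborn set `r` in which
condition D1 is replaced by the strengthened condition D1', and whose reduced LSTS
`TS_r` has finitely many states, the reduced LSTS `TS_r` is stutter-trace equivalent
to `TS`. -/
theorem stubborn_sets_with_D1'_preserve_stutter_trace_equivalence
    {S A l : Type*} (Tr : S → A → S → Prop) (s0 : S) (L : S → Set l) (I : Set A)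
    (hI : InvisibleSet Tr L I) (r : S → Set A)
    (hstub :
      (∀ s, CondD1' Tr I r s ∧ CondD2w Tr r s ∧ CondV Tr I r s ∧ CondI Tr I r s) ∨
      (∀ s, CondD0 Tr r s ∧ CondD1' Tr I r s ∧ CondD2 Tr r s ∧ CondV Tr I r s ∧
        CondI Tr I r s))
    (hcondL : CondL Tr I r s0)
    (hfin : {s | RedReach Tr r s0 s}.Finite) :
    StutterTraceEquiv (RedTr Tr r s0) s0 L Tr s0 L :=
  stubborn_sets_with_D1'_preserve_stutter_trace_equivalence_general hI (fun s _ => hstub.elim (· s)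
    fun h => let ⟨hD0, hD1, hD2, hV, hCI⟩ := h s; ⟨hD1, hD2.condD2w hD0, hV, hCI⟩) hcondL hfin
end
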